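/- Fix integers 1 ≤ m ≤ n−2, a bounded measurable F:[−1,1]^m→ℝ, and a bounded measurable g:[−1,1]→ℝ that is positive semi-definite on S^{n−m−1}. Regarding the Stiefel-averaged function H as a function of t = ⟨x,y⟩ (which is possible by point-pair invariance), for every integer k ≥ 0 one has ∫_{−1}^1 H(t)·p_k^{(n−3)/2,(n−3)/2}(t)·(1−t²)^{(n−3)/2} dt ≥ 0. -/

import Mathlib

/-!
For a fixed frame `z`, two generic points have unit projections `projC z x`, `projC z y` to a space
of dimension `n - m`, so `h(x, y; z)` is `F(⟪x, z⟫) F(⟪y, z⟫)` times a kernel that is positive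
semi-definite there. Averaging over the frames shows that `H` defines a nonnegative quadratic form
on continuous functions on `S^{n-1}`. Testing this form on a zonal polynomial
`P(⟪z₀, ·⟫)` with `P = p_k^{(n-3)/2,(n-3)/2}` isolates the `k`-th coefficient of `H`: by the
Funk–Hecke formula, `∫ H(⟪x, y⟫) P(⟪z₀, y⟫) dy` is a positive multiple of
`P(⟪z₀, x⟫) ∫ H(t) P(t) (1 - t²)^((n-3)/2) dt`, and integrating it against `P(⟪z₀, x⟫)` leaves
a positive factor.

The Funk–Hecke formula rests on two facts. The inner product of a fixed unit vector with a uniform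
point of the sphere has law proportional to `(1 - t²)^((n-3)/2) dt`, and invariance under the
reflections fixing `x` turns averages of `f(⟪x, y⟫) ⟪z₀, y⟫^j` over `y` into averages
of `f(⟪x, y⟫) Q(⟪x, y⟫)` for a polynomial `Q` of degree at most `j`. Hence `P(⟪z₀, ·⟫)` averages to
a polynomial in `⟪x, ·⟫` which inherits the orthogonality relations defining `P` up to a scalar.
-/

open MeasureTheory Filter Real
open scoped RealInnerProductSpace

noncomputable section

/-- Generalized binomial coefficient `C(a, k)` for real `a`. -/
def genBinom (a : ℝ) (k : ℕ) : ℝ := (∏ i ∈ Finset.range k, (a - i)) / (Nat.factorial k : ℝ)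

/-- The Jacobi polynomial `p_d^{α,β}`, via the standard explicit formula; it is the degree-`d`
polynomial orthogonal to lower degrees for the weight `(1-t)^α (1+t)^β` on `[-1,1]`,
normalized by `p_d^{α,β}(1) = Γ(d+α+1)/(Γ(α+1)Γ(d+1))`. -/
def jacobiP (α β : ℝ) (d : ℕ) (x : ℝ) : ℝ :=
  ∑ s ∈ Finset.range (d + 1),
    genBinom ((d : ℝ) + α) (d - s) * genBinom ((d : ℝ) + β) s *
      ((x - 1) / 2) ^ s * ((x + 1) / 2) ^ (d - s)

/-- The Stiefel manifold of orthonormal `m`-frames in `ℝ^n`. -/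
abbrev Stiefel (n m : ℕ) : Type :=
  {z : Fin m → EuclideanSpace ℝ (Fin n) // Orthonormal ℝ z}

/-- Action of a linear isometry on frames. -/
def frameMap {n m : ℕ} (A : EuclideanSpace ℝ (Fin n) ≃ₗᵢ[ℝ] EuclideanSpace ℝ (Fin n))
    (z : Stiefel n m) : Stiefel n m :=
  ⟨fun i => A (z.1 i), z.2.comp_linearIsometry A.toLinearIsometry⟩

/-- `ν` is an `O(n)`-invariant probability measure on the Stiefel manifold. -/
def IsInvProb {n m : ℕ} (ν : Measure (Stiefel n m)) : Prop :=
  IsProbabilityMeasure ν ∧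
    ∀ A : EuclideanSpace ℝ (Fin n) ≃ₗᵢ[ℝ] EuclideanSpace ℝ (Fin n),
      Measure.map (frameMap A) ν = ν

/-- Normalized projection of `x` onto the orthogonal complement of `span (z 1, …, z m)`. -/
def projC {n m : ℕ} (z : Fin m → EuclideanSpace ℝ (Fin n)) (x : EuclideanSpace ℝ (Fin n)) :
    EuclideanSpace ℝ (Fin n) :=
  ‖x - ∑ i, ⟪x, z i⟫ • z i‖⁻¹ • (x - ∑ i, ⟪x, z i⟫ • z i)

/-- The integrand `h(x, y; z₁, …, z_m)`. -/
def hfun {n m : ℕ} (F : (Fin m → ℝ) → ℝ) (g : ℝ → ℝ)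
    (x y : EuclideanSpace ℝ (Fin n)) (z : Fin m → EuclideanSpace ℝ (Fin n)) : ℝ :=
  F (fun i => ⟪x, z i⟫) * F (fun i => ⟪y, z i⟫) * g ⟪projC z x, projC z y⟫

/-- The Stiefel average `H(x,y)`. -/
def Hfun {n m : ℕ} (ν : Measure (Stiefel n m)) (F : (Fin m → ℝ) → ℝ) (g : ℝ → ℝ)
    (x y : EuclideanSpace ℝ (Fin n)) : ℝ :=
  ∫ z, hfun F g x y z.1 ∂ν

/-- `g` is positive semi-definite on the unit sphere `S^{N-1} ⊂ ℝ^N`. -/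
def PosSemidefOnSphere (N : ℕ) (g : ℝ → ℝ) : Prop :=
  ∀ (M : ℕ) (w : Fin M → EuclideanSpace ℝ (Fin N)) (c : Fin M → ℝ),
    (∀ i, ‖w i‖ = 1) → 0 ≤ ∑ i, ∑ j, c i * c j * g ⟪w i, w j⟫

/-- The Stiefel average `H` as a function of `t = ⟪x, y⟫`, evaluated on a canonical pair of
unit vectors with inner product `t` (legitimate by point-pair invariance). -/
def HofT {n m : ℕ} (hn : 2 ≤ n) (ν : Measure (Stiefel n m)) (F : (Fin m → ℝ) → ℝ)
    (g : ℝ → ℝ) (t : ℝ) : ℝ :=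
  Hfun ν F g (EuclideanSpace.single (⟨0, by omega⟩ : Fin n) 1)
    (t • EuclideanSpace.single (⟨0, by omega⟩ : Fin n) 1 +
      Real.sqrt (1 - t ^ 2) • EuclideanSpace.single (⟨1, by omega⟩ : Fin n) 1)

section JacobiMeasure

/-- The Jacobi weight `(1 - t)^α (1 + t)^β dt` on `(-1, 1)`, as a measure on `ℝ`. -/
def jacobiMeasure (α β : ℝ) : Measure ℝ :=
  (volume.restrict (Set.Ioo (-1) 1)).withDensity
    fun t => ENNReal.ofReal ((1 - t) ^ α * (1 + t) ^ β)

variable {α β : ℝ}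

lemma jacobiWeight_pos (α β : ℝ) {t : ℝ} (ht : t ∈ Set.Ioo (-1 : ℝ) 1) :
    0 < (1 - t) ^ α * (1 + t) ^ β :=
  mul_pos (rpow_pos_of_pos (by linarith [ht.2]) _) (rpow_pos_of_pos (by linarith [ht.1]) _)

lemma integral_jacobiMeasure (α β : ℝ) (f : ℝ → ℝ) :
    ∫ t, f t ∂jacobiMeasure α β =
      ∫ t in Set.Ioo (-1 : ℝ) 1, f t * ((1 - t) ^ α * (1 + t) ^ β) := by
  rw [jacobiMeasure, integral_withDensity_eq_integral_toReal_smul (by fun_prop)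
    (ae_of_all _ fun _ => ENNReal.ofReal_lt_top)]
  refine setIntegral_congr_fun measurableSet_Ioo fun t ht => ?_
  simp only [ENNReal.toReal_ofReal (jacobiWeight_pos α β ht).le, smul_eq_mul, mul_comm (f t)]

lemma lintegral_jacobiMeasure (α β : ℝ) {f : ℝ → ENNReal} (hf : Measurable f) :
    ∫⁻ t, f t ∂jacobiMeasure α β =
      ∫⁻ t in Set.Ioo (-1 : ℝ) 1, ENNReal.ofReal ((1 - t) ^ α * (1 + t) ^ β) * f t :=
  lintegral_withDensity_eq_lintegral_mul _ (by fun_prop) hf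

lemma ae_jacobiMeasure_mem_Ioo (α β : ℝ) : ∀ᵐ t ∂jacobiMeasure α β, t ∈ Set.Ioo (-1 : ℝ) 1 :=
  (withDensity_absolutelyContinuous _ _).ae_le (ae_restrict_mem measurableSet_Ioo)

lemma jacobiMeasure_pos_of_isOpen (α β : ℝ) {U : Set ℝ} (hU : IsOpen U)
    (hne : (U ∩ Set.Ioo (-1) 1).Nonempty) : 0 < jacobiMeasure α β U := by
  have hvol : volume.restrict (Set.Ioo (-1 : ℝ) 1) U ≠ 0 := by
    rw [Measure.restrict_apply hU.measurableSet]
    exact ((hU.inter isOpen_Ioo).measure_pos volume hne).ne'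
  refine pos_iff_ne_zero.2 fun h => hvol ?_
  refine (withDensity_absolutelyContinuous' (by fun_prop) ?_) h
  filter_upwards [ae_restrict_mem measurableSet_Ioo] with t ht
  simpa using jacobiWeight_pos α β ht

lemma lintegral_Ioo_rpow_mul_one_sub_rpow {a b : ℝ} (ha : -1 < a) (hb : -1 < b) :
    ∫⁻ x in Set.Ioo (0 : ℝ) 1, ENNReal.ofReal (x ^ a * (1 - x) ^ b) =
      ENNReal.ofReal (ProbabilityTheory.beta (a + 1) (b + 1)) := by
  have hβ := ProbabilityTheory.beta_pos (α := a + 1) (β := b + 1) (by linarith) (by linarith)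
  have hpdf := ProbabilityTheory.lintegral_betaPDF_eq_one (α := a + 1) (β := b + 1)
    (by linarith) (by linarith)
  simp only [ProbabilityTheory.lintegral_betaPDF, add_sub_cancel_right, mul_assoc] at hpdf
  simp_rw [ENNReal.ofReal_mul (one_div_pos.2 hβ).le] at hpdf
  rw [lintegral_const_mul _ (by fun_prop), one_div, ENNReal.ofReal_inv_of_pos hβ] at hpdf
  rw [ENNReal.eq_inv_of_mul_eq_one_left ((mul_comm _ _).trans hpdf), inv_inv]

lemma jacobiMeasure_univ (hα : -1 < α) (hβ : -1 < β) :
    jacobiMeasure α β Set.univ =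
      ENNReal.ofReal (2 ^ (α + β + 1) * ProbabilityTheory.beta (α + 1) (β + 1)) := by
  have himage : (fun x : ℝ => 1 - 2 * x) '' Set.Ioo 0 1 = Set.Ioo (-1) 1 := by
    ext t
    constructor
    · rintro ⟨x, hx, rfl⟩
      constructor <;> linarith [hx.1, hx.2]
    · exact fun ht => ⟨(1 - t) / 2, ⟨by linarith [ht.2], by linarith [ht.1]⟩, by ring⟩
  have hderiv (x : ℝ) : HasDerivWithinAt (fun x : ℝ => 1 - 2 * x) (-2) (Set.Ioo 0 1) x := by
    simpa using ((hasDerivAt_id x).const_mul 2).const_sub 1 |>.hasDerivWithinAt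
  rw [jacobiMeasure, withDensity_apply _ MeasurableSet.univ, Measure.restrict_univ, ← himage,
    lintegral_image_eq_lintegral_abs_deriv_mul measurableSet_Ioo (fun x _ => hderiv x)
      (fun x _ y _ h => by simpa using h),
    ENNReal.ofReal_mul (by positivity), ← lintegral_Ioo_rpow_mul_one_sub_rpow hα hβ,
    ← lintegral_const_mul _ (by fun_prop)]
  refine setLIntegral_congr_fun measurableSet_Ioo fun x hx => ?_
  have h1x : 0 ≤ 1 - x := by linarith [hx.2]
  rw [← ENNReal.ofReal_mul (by positivity), ← ENNReal.ofReal_mul (by positivity),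
    show 1 - (1 - 2 * x) = 2 * x by ring, show 1 + (1 - 2 * x) = 2 * (1 - x) by ring,
    mul_rpow two_pos.le hx.1.le, mul_rpow two_pos.le h1x, rpow_add two_pos, rpow_add two_pos,
    rpow_one, abs_neg, abs_two]
  ring_nf

lemma isFiniteMeasure_jacobiMeasure (hα : -1 < α) (hβ : -1 < β) :
    IsFiniteMeasure (jacobiMeasure α β) :=
  ⟨by rw [jacobiMeasure_univ hα hβ]; exact ENNReal.ofReal_lt_top⟩

lemma integrable_jacobiMeasure_of_continuous (hα : -1 < α) (hβ : -1 < β) {f : ℝ → ℝ}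
    (hf : Continuous f) : Integrable f (jacobiMeasure α β) := by
  have := isFiniteMeasure_jacobiMeasure hα hβ
  rw [← Measure.restrict_eq_self_of_ae_mem ((ae_jacobiMeasure_mem_Ioo α β).mono
    fun t ht => Set.Ioo_subset_Icc_self ht)]
  exact hf.continuousOn.integrableOn_compact isCompact_Icc

lemma integral_pow_mul_pow_jacobiMeasure (hα : -1 < α) (hβ : -1 < β) (i j : ℕ) :
    ∫ t, (1 - t) ^ i * (1 + t) ^ j ∂jacobiMeasure α β =
      2 ^ (α + i + (β + j) + 1) * ProbabilityTheory.beta (α + i + 1) (β + j + 1) := by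
  have hαi : -1 < α + i := by linarith [i.cast_nonneg (α := ℝ)]
  have hβj : -1 < β + j := by linarith [j.cast_nonneg (α := ℝ)]
  calc ∫ t, (1 - t) ^ i * (1 + t) ^ j ∂jacobiMeasure α β
      = ∫ t, 1 ∂jacobiMeasure (α + i) (β + j) := by
        rw [integral_jacobiMeasure, integral_jacobiMeasure]
        refine setIntegral_congr_fun measurableSet_Ioo fun t ht => ?_
        simp only [rpow_add (show 0 < 1 - t by linarith [ht.2]),
          rpow_add (show 0 < 1 + t by linarith [ht.1]), rpow_natCast]
        ring
    _ = _ := by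
        have := ProbabilityTheory.beta_pos (α := α + i + 1) (β := β + j + 1)
          (by linarith) (by linarith)
        rw [integral_const, smul_eq_mul, mul_one, measureReal_def, jacobiMeasure_univ hαi hβj,
          ENNReal.toReal_ofReal (by positivity)]

open Polynomial in
lemma integral_eval_jacobiMeasure_pos (hα : -1 < α) (hβ : -1 < β) {p : ℝ[X]} (hp : p ≠ 0)
    (hnonneg : ∀ t ∈ Set.Ioo (-1 : ℝ) 1, 0 ≤ p.eval t) :
    0 < ∫ t, p.eval t ∂jacobiMeasure α β := by
  rw [integral_pos_iff_support_of_nonneg_ae ((ae_jacobiMeasure_mem_Ioo α β).mono hnonneg)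
    (integrable_jacobiMeasure_of_continuous hα hβ p.continuous)]
  refine jacobiMeasure_pos_of_isOpen α β p.continuous.isOpen_support ?_
  obtain ⟨t, ht, hroot⟩ :=
    (Set.Ioo_infinite (show (-1 : ℝ) < 1 by norm_num)).exists_notMem_finset p.roots.toFinset
  exact ⟨t, by simpa [hp] using hroot, ht⟩

end JacobiMeasure

section JacobiPolynomial

open Polynomial

lemma genBinom_mul_factorial_mul_Gamma {a : ℝ} {j : ℕ} (h : (j : ℝ) < a + 1) :
    genBinom a j * (Nat.factorial j : ℝ) * Gamma (a - j + 1) = Gamma (a + 1) := by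
  rw [genBinom, div_mul_cancel₀ _ (by positivity)]
  induction j with
  | zero => simp
  | succ j ih =>
    push_cast at h ⊢
    rw [Finset.prod_range_succ, ← ih (by linarith),
      Gamma_add_one (show a - (j : ℝ) ≠ 0 by linarith)]
    ring_nf

lemma Gamma_add_natCast {z : ℝ} (hz : 0 < z) (i : ℕ) :
    Gamma (z + i) = (ascPochhammer ℝ i).eval z * Gamma z := by
  induction i with
  | zero => simp
  | succ i ih =>
    rw [ascPochhammer_succ_eval]
    push_cast
    rw [← add_assoc, Gamma_add_one (by positivity), ih]
    ring

lemma sum_neg_one_pow_mul_choose_mul_eval_eq_zero {R : Type*} [CommRing R] {Q : R[X]} {k : ℕ}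
    (hQ : Q.natDegree < k) :
    ∑ s ∈ Finset.range (k + 1), (-1 : R) ^ s * (k.choose s) * Q.eval (s : R) = 0 := by
  have h := congrFun (Polynomial.fwdDiff_iter_eq_zero_of_degree_lt hQ) 0
  rw [fwdDiff_iter_eq_sum_shift] at h
  calc _ = (-1) ^ k * ∑ s ∈ Finset.range (k + 1),
        ((-1 : ℤ) ^ (k - s) * k.choose s) • Q.eval (0 + s • (1 : R)) := by
        rw [Finset.mul_sum]
        refine Finset.sum_congr rfl fun s hs => ?_
        obtain ⟨j, rfl⟩ := Nat.exists_eq_add_of_le (Finset.mem_range_succ_iff.1 hs)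
        have hsign : (-1 : R) ^ (s + j) * (-1) ^ j = (-1) ^ s := by
          rw [pow_add, mul_assoc, ← mul_pow]; simp
        rw [← hsign]
        simp only [zsmul_eq_mul, nsmul_eq_mul, mul_one, zero_add, add_tsub_cancel_left]
        push_cast
        ring
    _ = 0 := by rw [h]; simp

/-- The Jacobi polynomial `p_k^{α,β}` as an element of `ℝ[X]`; `jacobiP α β k` is its evaluation. -/
def jacobiPoly (α β : ℝ) (k : ℕ) : ℝ[X] :=
  ∑ s ∈ Finset.range (k + 1),
    C (genBinom ((k : ℝ) + α) (k - s) * genBinom ((k : ℝ) + β) s) *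
      (C (1 / 2) * (X - 1)) ^ s * (C (1 / 2) * (X + 1)) ^ (k - s)

lemma eval_jacobiPoly (α β : ℝ) (k : ℕ) (t : ℝ) :
    (jacobiPoly α β k).eval t = jacobiP α β k t := by
  simp only [jacobiPoly, jacobiP, eval_finsetSum]
  refine Finset.sum_congr rfl fun s _ => ?_
  simp only [eval_mul, eval_C, eval_pow, eval_sub, eval_add, eval_X, eval_one]
  ring

lemma jacobiPoly_mem_degreeLT (α β : ℝ) (k : ℕ) : jacobiPoly α β k ∈ degreeLT ℝ (k + 1) := by
  rw [mem_degreeLT, degree_lt_iff_coeff_zero]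
  refine fun i hi => coeff_eq_zero_of_natDegree_lt (lt_of_le_of_lt ?_ (Nat.lt_of_succ_le hi))
  refine natDegree_sum_le_of_forall_le _ _ fun s hs => ?_
  have := Finset.mem_range_succ_iff.1 hs
  compute_degree
  omega

lemma jacobiPoly_eval_one_pos {α : ℝ} (hα : -1 < α) (β : ℝ) (k : ℕ) :
    0 < (jacobiPoly α β k).eval 1 := by
  rw [eval_jacobiPoly, jacobiP, Finset.sum_eq_single 0 (fun s _ hs => by simp [hs]) (by simp)]
  suffices 0 < ∏ i ∈ Finset.range k, ((k : ℝ) + α - i) by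
    norm_num [genBinom]
    positivity
  refine Finset.prod_pos fun i hi => ?_
  have : (i : ℝ) + 1 ≤ k := by exact_mod_cast Finset.mem_range.1 hi
  linarith

variable {α β : ℝ}

lemma genBinom_mul_beta (hα : -1 < α) (hβ : -1 < β) {k s : ℕ} (hs : s ≤ k) (i : ℕ) :
    genBinom (k + α) (k - s) * genBinom (k + β) s *
        ProbabilityTheory.beta (α + ↑(s + i) + 1) (β + ↑(k - s) + 1) =
      Gamma (k + α + 1) * Gamma (k + β + 1) / (k.factorial * Gamma (α + β + k + i + 2)) *
        (k.choose s * ((ascPochhammer ℝ i).comp (X + C (α + 1))).eval (s : ℝ)) := by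
  have hsk : (s : ℝ) ≤ k := by exact_mod_cast hs
  have := s.cast_nonneg (α := ℝ)
  have hchoose : (k.choose s : ℝ) * s.factorial * (k - s).factorial = k.factorial := by
    exact_mod_cast Nat.choose_mul_factorial_mul_factorial hs
  have hGamma₁ := genBinom_mul_factorial_mul_Gamma (a := k + α) (j := k - s)
    (by rw [Nat.cast_sub hs]; linarith)
  have hGamma₂ := genBinom_mul_factorial_mul_Gamma (a := k + β) (j := s) (by linarith)
  have hGamma₃ := Gamma_add_natCast (z := s + α + 1) (by linarith) i
  rw [Nat.cast_sub hs, show (k : ℝ) + α - (k - s) + 1 = s + α + 1 by ring] at hGamma₁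
  rw [ProbabilityTheory.beta, Nat.cast_sub hs,
    show α + ↑(s + i) + 1 = (s : ℝ) + α + 1 + i by push_cast; ring, hGamma₃,
    show β + (k - s : ℝ) + 1 = k + β - s + 1 by ring,
    show (s : ℝ) + α + 1 + i + (k + β - s + 1) = α + β + k + i + 2 by ring,
    ← hGamma₁, ← hGamma₂, ← hchoose]
  simp only [eval_comp, eval_add, eval_X, eval_C, ← add_assoc]
  have : (k.choose s : ℝ) ≠ 0 := by exact_mod_cast (Nat.choose_pos hs).ne'
  field_simp

lemma integral_jacobiPoly_mul_one_sub_pow (hα : -1 < α) (hβ : -1 < β) {i k : ℕ} (hi : i < k) :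
    ∫ t, (jacobiPoly α β k).eval t * (1 - t) ^ i ∂jacobiMeasure α β = 0 := by
  have hterm (t : ℝ) : (jacobiPoly α β k).eval t * (1 - t) ^ i =
      ∑ s ∈ Finset.range (k + 1), ((-1) ^ s / 2 ^ k *
        (genBinom (k + α) (k - s) * genBinom (k + β) s)) *
          ((1 - t) ^ (s + i) * (1 + t) ^ (k - s)) := by
    rw [eval_jacobiPoly, jacobiP, Finset.sum_mul]
    refine Finset.sum_congr rfl fun s hs => ?_
    obtain ⟨j, rfl⟩ := Nat.exists_eq_add_of_le (Finset.mem_range_succ_iff.1 hs)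
    rw [show (t - 1) / 2 = -1 * (1 - t) / 2 by ring, add_comm t 1, add_tsub_cancel_left,
      div_pow, div_pow, mul_pow, pow_add, pow_add]
    ring
  simp_rw [hterm]
  rw [integral_finsetSum _ fun s _ =>
    (integrable_jacobiMeasure_of_continuous hα hβ (by fun_prop)).const_mul _]
  have hsum : ∀ s ∈ Finset.range (k + 1), ∫ t, ((-1) ^ s / 2 ^ k *
        (genBinom (k + α) (k - s) * genBinom (k + β) s)) *
          ((1 - t) ^ (s + i) * (1 + t) ^ (k - s)) ∂jacobiMeasure α β =
      2 ^ (α + β + i + k + 1) / 2 ^ k *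
        (Gamma (k + α + 1) * Gamma (k + β + 1) / (k.factorial * Gamma (α + β + k + i + 2))) *
        ((-1) ^ s * k.choose s * ((ascPochhammer ℝ i).comp (X + C (α + 1))).eval (s : ℝ)) := by
    intro s hs
    have hsk := Finset.mem_range_succ_iff.1 hs
    rw [integral_const_mul, integral_pow_mul_pow_jacobiMeasure hα hβ,
      show α + ↑(s + i) + (β + ↑(k - s)) + 1 = α + β + i + k + 1 by
        rw [Nat.cast_sub hsk]; push_cast; ring]
    linear_combination (-1) ^ s / 2 ^ k * 2 ^ (α + β + i + k + 1) *
      genBinom_mul_beta hα hβ hsk i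
  rw [Finset.sum_congr rfl hsum, ← Finset.mul_sum,
    sum_neg_one_pow_mul_choose_mul_eval_eq_zero, mul_zero]
  rwa [natDegree_comp, ascPochhammer_natDegree, natDegree_X_add_C, mul_one]

theorem integral_jacobiPoly_mul_eq_zero (hα : -1 < α) (hβ : -1 < β) {k : ℕ} {p : ℝ[X]}
    (hp : p ∈ degreeLT ℝ k) :
    ∫ t, (jacobiPoly α β k).eval t * p.eval t ∂jacobiMeasure α β = 0 := by
  have hdeg : (p.comp (1 - X)).natDegree < k ∨ p = 0 := by
    refine or_iff_not_imp_right.2 fun h0 => ?_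
    rw [natDegree_comp, show (1 - X : ℝ[X]) = -(X - C 1) by simp, natDegree_neg,
      natDegree_X_sub_C, mul_one]
    exact (natDegree_lt_iff_degree_lt h0).2 (mem_degreeLT.1 hp)
  rcases hdeg with hdeg | rfl
  · have hexpand (t : ℝ) : (jacobiPoly α β k).eval t * p.eval t = ∑ i ∈ Finset.range k,
        (p.comp (1 - X)).coeff i * ((jacobiPoly α β k).eval t * (1 - t) ^ i) := by
      have : p.eval t = (p.comp (1 - X)).eval (1 - t) := by simp
      rw [this, eval_eq_sum_range' hdeg, Finset.mul_sum]
      exact Finset.sum_congr rfl fun i _ => by ring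
    simp_rw [hexpand]
    rw [integral_finsetSum _ fun i _ =>
      (integrable_jacobiMeasure_of_continuous hα hβ (by fun_prop)).const_mul _]
    refine Finset.sum_eq_zero fun i hi => ?_
    rw [integral_const_mul, integral_jacobiPoly_mul_one_sub_pow hα hβ (Finset.mem_range.1 hi),
      mul_zero]
  · simp

lemma eq_zero_of_integral_mul_self_eq_zero (hα : -1 < α) (hβ : -1 < β) {p : ℝ[X]}
    (h : ∫ t, p.eval t * p.eval t ∂jacobiMeasure α β = 0) : p = 0 := by
  by_contra hp
  refine (integral_eval_jacobiMeasure_pos hα hβ (mul_ne_zero hp hp) fun t _ => ?_).ne' ?_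
  · simpa only [eval_mul] using mul_self_nonneg _
  · simpa only [eval_mul] using h

lemma mem_degreeLT_of_mem_degreeLT_succ {R : Type*} [Semiring R] {p : R[X]} {k : ℕ}
    (hp : p ∈ degreeLT R (k + 1)) (hk : p.coeff k = 0) : p ∈ degreeLT R k := by
  rw [mem_degreeLT, degree_lt_iff_coeff_zero] at hp ⊢
  exact fun i hi => hi.eq_or_lt.elim (fun h => h ▸ hk) (hp i)

lemma coeff_jacobiPoly_ne_zero (hα : -1 < α) (hβ : -1 < β) (k : ℕ) :
    (jacobiPoly α β k).coeff k ≠ 0 := by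
  intro hk
  have hP := eq_zero_of_integral_mul_self_eq_zero hα hβ <| integral_jacobiPoly_mul_eq_zero hα hβ <|
    mem_degreeLT_of_mem_degreeLT_succ (jacobiPoly_mem_degreeLT α β k) hk
  simpa [hP] using (jacobiPoly_eval_one_pos hα β k).ne'

lemma exists_eq_C_mul_jacobiPoly (hα : -1 < α) (hβ : -1 < β) {k : ℕ} {Q : ℝ[X]}
    (hQ : Q ∈ degreeLT ℝ (k + 1))
    (horth : ∀ p ∈ degreeLT ℝ k, ∫ t, Q.eval t * p.eval t ∂jacobiMeasure α β = 0) :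
    ∃ c, Q = C c * jacobiPoly α β k := by
  set P := jacobiPoly α β k
  set c := Q.coeff k / P.coeff k with hc
  refine ⟨c, sub_eq_zero.1 (eq_zero_of_integral_mul_self_eq_zero hα hβ ?_)⟩
  have hmem : Q - C c * P ∈ degreeLT ℝ k := by
    refine mem_degreeLT_of_mem_degreeLT_succ (sub_mem hQ ?_) ?_
    · rw [← smul_eq_C_mul]
      exact Submodule.smul_mem _ _ (jacobiPoly_mem_degreeLT α β k)
    · rw [coeff_sub, coeff_C_mul, hc, div_mul_cancel₀ _ (coeff_jacobiPoly_ne_zero hα hβ k),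
        sub_self]
  calc ∫ t, (Q - C c * P).eval t * (Q - C c * P).eval t ∂jacobiMeasure α β
      = ∫ t, Q.eval t * (Q - C c * P).eval t ∂jacobiMeasure α β -
          ∫ t, c * (P.eval t * (Q - C c * P).eval t) ∂jacobiMeasure α β := by
        rw [← integral_sub] <;> try exact integrable_jacobiMeasure_of_continuous hα hβ (by fun_prop)
        congr! 2 with t
        simp only [eval_mul, eval_sub, eval_C]
        ring
    _ = 0 := by
        rw [horth _ hmem, integral_const_mul, integral_jacobiPoly_mul_eq_zero hα hβ hmem]
        simp

end JacobiPolynomial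

section PolarCoordinates

open Module

section NormedSpace

variable {E : Type*} [NormedAddCommGroup E] [NormedSpace ℝ E] [FiniteDimensional ℝ E]
  [Nontrivial E] [MeasurableSpace E] [BorelSpace E] (μ : Measure E) [μ.IsAddHaarMeasure]

lemma lintegral_eq_lintegral_toSphere {F : E → ENNReal} (hF : Measurable F) :
    ∫⁻ v, F v ∂μ = ∫⁻ e, (∫⁻ r in Set.Ioi (0 : ℝ),
      ENNReal.ofReal (r ^ (finrank ℝ E - 1)) * F (r • (e : E))) ∂μ.toSphere := by
  set ψ : Metric.sphere (0 : E) 1 × Set.Ioi (0 : ℝ) → ENNReal := fun p => F (p.2.1 • p.1.1)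
  have hψ : Measurable ψ := by fun_prop
  calc ∫⁻ v, F v ∂μ = ∫⁻ v : ({0}ᶜ : Set E), F v ∂μ.comap (↑) := by
        rw [lintegral_subtype_comap (measurableSet_singleton _).compl,
          restrict_compl_singleton]
    _ = ∫⁻ v : ({0}ᶜ : Set E), ψ (homeomorphUnitSphereProd E v) ∂μ.comap (↑) := by
        congr! 2 with v
        simp [ψ, smul_smul, mul_inv_cancel₀ (norm_ne_zero_iff.2 v.2)]
    _ = ∫⁻ e, (∫⁻ r, F (r.1 • e.1) ∂Measure.volumeIoiPow (finrank ℝ E - 1)) ∂μ.toSphere := by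
        rw [μ.measurePreserving_homeomorphUnitSphereProd.lintegral_comp hψ,
          lintegral_prod _ hψ.aemeasurable]
    _ = _ := by
        congr! 2 with e
        rw [Measure.volumeIoiPow,
          lintegral_withDensity_eq_lintegral_mul _ (by fun_prop) (by fun_prop)]
        exact lintegral_subtype_comap measurableSet_Ioi
          fun r => ENNReal.ofReal (r ^ (finrank ℝ E - 1)) * F (r • (e : E))

lemma lintegral_comp_norm {G : ℝ → ENNReal} (hG : Measurable G) :
    ∫⁻ v, G ‖v‖ ∂μ = μ.toSphere Set.univ *
      ∫⁻ r in Set.Ioi (0 : ℝ), ENNReal.ofReal (r ^ (finrank ℝ E - 1)) * G r := by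
  have hGnorm : Measurable fun v : E => G ‖v‖ := by fun_prop
  rw [lintegral_eq_lintegral_toSphere μ hGnorm, mul_comm, ← lintegral_const]
  congr! 2 with e
  refine setLIntegral_congr_fun measurableSet_Ioi fun r (hr : 0 < r) => ?_
  simp [norm_smul, abs_of_pos hr]

end NormedSpace

variable {E : Type*} [NormedAddCommGroup E] [InnerProductSpace ℝ E]

lemma norm_smul_add_orthogonal {x : E} (hx : ‖x‖ = 1) (a : ℝ) (w : (ℝ ∙ x)ᗮ) :
    ‖a • x + (w : E)‖ = √(a ^ 2 + ‖w‖ ^ 2) := by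
  have hinner : ⟪a • x, (w : E)⟫ = 0 := by
    rw [inner_smul_left, Submodule.mem_orthogonal_singleton_iff_inner_right.1 w.2, mul_zero]
  rw [eq_comm, sqrt_eq_iff_mul_self_eq (by positivity) (norm_nonneg _),
    norm_add_sq_eq_norm_sq_add_norm_sq_of_inner_eq_zero _ _ hinner, norm_smul, hx,
    Submodule.coe_norm, mul_one, norm_eq_abs, abs_mul_abs_self]
  ring

lemma inner_smul_add_orthogonal {x : E} (hx : ‖x‖ = 1) (a : ℝ) (w : (ℝ ∙ x)ᗮ) :
    ⟪x, a • x + (w : E)⟫ = a := by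
  rw [inner_add_right, inner_smul_right, real_inner_self_eq_norm_sq, hx,
    Submodule.mem_orthogonal_singleton_iff_inner_right.1 w.2]
  ring

variable [FiniteDimensional ℝ E] [MeasurableSpace E] [BorelSpace E]

lemma measurePreserving_smul_add_orthogonal {x : E} (hx : ‖x‖ = 1) :
    MeasurePreserving fun p : ℝ × (ℝ ∙ x)ᗮ => p.1 • x + (p.2 : E) := by
  have := ((ℝ ∙ x).orthogonalDecomposition.symm.measurePreserving.comp
    (WithLp.volume_preserving_toLp (ℝ ∙ x) (ℝ ∙ x)ᗮ)).comp
      ((LinearIsometryEquiv.toSpanUnitSingleton x hx).measurePreserving.prod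
        (MeasurePreserving.id volume))
  convert this using 1
  · ext p
    simp
  · exact Measure.volume_eq_prod _ _

lemma lintegral_upper_half_plane_eq_polar {G : ℝ × ℝ → ENNReal} (hG : Measurable G) :
    ∫⁻ a, ∫⁻ r in Set.Ioi (0 : ℝ), G (a, r) =
      ∫⁻ ρ in Set.Ioi (0 : ℝ), ∫⁻ θ in Set.Ioo 0 π,
        ENNReal.ofReal ρ * G (ρ * cos θ, ρ * sin θ) := by
  set G' : ℝ × ℝ → ENNReal := (Set.univ ×ˢ Set.Ioi 0).indicator G with hG'
  have hG'm : Measurable G' := hG.indicator (MeasurableSet.univ.prod measurableSet_Ioi)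
  calc ∫⁻ a, ∫⁻ r in Set.Ioi (0 : ℝ), G (a, r) = ∫⁻ p, G' p := by
        rw [hG', lintegral_indicator (MeasurableSet.univ.prod measurableSet_Ioi),
          Measure.volume_eq_prod, setLIntegral_prod _ hG.aemeasurable, Measure.restrict_univ]
    _ = ∫⁻ ρ in Set.Ioi (0 : ℝ), ∫⁻ θ in Set.Ioo (-π) π,
          ENNReal.ofReal ρ * G' (ρ * cos θ, ρ * sin θ) := by
        rw [← lintegral_comp_polarCoord_symm, Measure.volume_eq_prod]
        refine setLIntegral_prod _ (Measurable.aemeasurable ?_)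
        simp only [polarCoord_symm_apply, smul_eq_mul]
        fun_prop
    _ = _ := by
        refine setLIntegral_congr_fun measurableSet_Ioi fun ρ (hρ : 0 < ρ) => ?_
        have hsub : Set.Ioo 0 π ⊆ Set.Ioo (-π) π := Set.Ioo_subset_Ioo_left (by linarith [pi_pos])
        rw [← lintegral_indicator measurableSet_Ioo, ← lintegral_indicator measurableSet_Ioo]
        congr! 2 with θ
        by_cases hθ : θ ∈ Set.Ioo 0 π
        · have hmem : (ρ * cos θ, ρ * sin θ) ∈ Set.univ ×ˢ Set.Ioi (0 : ℝ) :=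
            ⟨trivial, mul_pos hρ (sin_pos_of_mem_Ioo hθ)⟩
          rw [Set.indicator_of_mem hθ, Set.indicator_of_mem (hsub hθ), hG',
            Set.indicator_of_mem hmem]
        · rw [Set.indicator_of_notMem hθ, Set.indicator_apply_eq_zero]
          intro hθ'
          have hsin : sin θ ≤ 0 := sin_nonpos_of_nonpos_of_neg_pi_le
            (not_lt.1 fun h => hθ ⟨h, hθ'.2⟩) hθ'.1.le
          rw [hG', Set.indicator_of_notMem (fun h =>
            (mul_nonpos_of_nonneg_of_nonpos hρ.le hsin).not_gt h.2), mul_zero]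

lemma cos_image_Ioo_zero_pi : cos '' Set.Ioo 0 π = Set.Ioo (-1) 1 := by
  ext t
  constructor
  · rintro ⟨θ, hθ, rfl⟩
    have := sin_pos_of_mem_Ioo hθ
    have := sin_sq_add_cos_sq θ
    constructor <;> nlinarith
  · exact fun ht => ⟨arccos t, ⟨arccos_pos.2 ht.2, (arccos_le_pi t).lt_of_ne
      fun h => ht.1.not_ge (arccos_eq_pi.1 h)⟩, cos_arccos ht.1.le ht.2.le⟩

lemma lintegral_sin_pow_mul_comp_cos (N : ℕ) {f : ℝ → ENNReal} (hf : Measurable f) :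
    ∫⁻ θ in Set.Ioo 0 π, ENNReal.ofReal (sin θ ^ N) * f (cos θ) =
      ∫⁻ t, f t ∂jacobiMeasure ((N - 1 : ℝ) / 2) ((N - 1 : ℝ) / 2) := by
  rw [lintegral_jacobiMeasure _ _ hf, ← cos_image_Ioo_zero_pi,
    lintegral_image_eq_lintegral_abs_deriv_mul measurableSet_Ioo
      (fun x _ => (hasDerivAt_cos x).hasDerivWithinAt)
      (injOn_cos.mono Set.Ioo_subset_Icc_self)]
  refine setLIntegral_congr_fun measurableSet_Ioo fun θ hθ => ?_
  have hsin := sin_pos_of_mem_Ioo hθ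
  obtain ⟨hlower, hupper⟩ : cos θ ∈ Set.Ioo (-1) 1 := cos_image_Ioo_zero_pi ▸ ⟨θ, hθ, rfl⟩
  have hpow : sin θ * (sin θ ^ 2) ^ ((N - 1 : ℝ) / 2) = sin θ ^ N := by
    rw [← rpow_natCast (sin θ) 2, ← rpow_mul hsin.le, mul_comm, ← rpow_add_one hsin.ne',
      ← rpow_natCast (sin θ) N]
    congr 1
    push_cast
    ring
  rw [← mul_assoc, ← ENNReal.ofReal_mul (abs_nonneg _), abs_neg, abs_of_pos hsin,
    ← mul_rpow (by linarith) (by linarith),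
    show (1 - cos θ) * (1 + cos θ) = sin θ ^ 2 by rw [sin_sq]; ring, hpow]

lemma lintegral_inner_norm_eq_polar {x : E} (hx : ‖x‖ = 1) (hE : 2 ≤ finrank ℝ E)
    {F : ℝ → ℝ → ENNReal} (hF : Measurable (Function.uncurry F)) :
    ∫⁻ v, F ⟪x, v⟫ ‖v‖ =
      (volume : Measure (ℝ ∙ x)ᗮ).toSphere Set.univ * ∫⁻ ρ in Set.Ioi (0 : ℝ),
        ENNReal.ofReal (ρ ^ (finrank ℝ E - 1)) * ∫⁻ θ in Set.Ioo 0 π,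
          ENNReal.ofReal (sin θ ^ (finrank ℝ E - 2)) * F (ρ * cos θ) ρ := by
  obtain ⟨N, hN⟩ := Nat.exists_eq_add_of_le' hE
  have hx0 : x ≠ 0 := norm_ne_zero_iff.1 (by simp [hx])
  have : Fact (finrank ℝ E = N + 1 + 1) := ⟨hN⟩
  have hW : finrank ℝ (ℝ ∙ x)ᗮ = N + 1 := Submodule.finrank_orthogonal_span_singleton hx0
  have : Nontrivial (ℝ ∙ x)ᗮ := nontrivial_of_finrank_pos (R := ℝ) (by omega)
  have hsub₁ : finrank ℝ E - 1 = N + 1 := by omega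
  have hsub₂ : finrank ℝ E - 2 = N := by omega
  set G : ℝ × ℝ → ENNReal := fun p => F p.1 √(p.1 ^ 2 + p.2 ^ 2) with hG
  have hGm : Measurable G := by fun_prop
  have hFm : Measurable fun v : E => F ⟪x, v⟫ ‖v‖ := by fun_prop
  calc ∫⁻ v, F ⟪x, v⟫ ‖v‖ = ∫⁻ p : ℝ × (ℝ ∙ x)ᗮ, G (p.1, ‖p.2‖) := by
        rw [← (measurePreserving_smul_add_orthogonal hx).lintegral_comp hFm]
        simp only [inner_smul_add_orthogonal hx, norm_smul_add_orthogonal hx, hG]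
    _ = ∫⁻ a, (volume : Measure (ℝ ∙ x)ᗮ).toSphere Set.univ *
          ∫⁻ r in Set.Ioi (0 : ℝ), ENNReal.ofReal (r ^ N) * G (a, r) := by
        rw [Measure.volume_eq_prod, lintegral_prod _ (by fun_prop)]
        congr! 2 with a
        exact (lintegral_comp_norm _ (G := fun r => G (a, r)) (by fun_prop)).trans (by simp [hW])
    _ = (volume : Measure (ℝ ∙ x)ᗮ).toSphere Set.univ *
          ∫⁻ ρ in Set.Ioi (0 : ℝ), ∫⁻ θ in Set.Ioo 0 π,
            ENNReal.ofReal ρ * (ENNReal.ofReal ((ρ * sin θ) ^ N) * G (ρ * cos θ, ρ * sin θ)) := by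
        rw [lintegral_const_mul' _ _ (measure_ne_top _ _), ← lintegral_upper_half_plane_eq_polar
          (G := fun p => ENNReal.ofReal (p.2 ^ N) * G p) (by fun_prop)]
    _ = _ := by
        rw [hsub₁, hsub₂]
        congr 1
        refine setLIntegral_congr_fun measurableSet_Ioi fun ρ (hρ : 0 < ρ) => ?_
        rw [← lintegral_const_mul' _ _ ENNReal.ofReal_ne_top]
        refine setLIntegral_congr_fun measurableSet_Ioo fun θ hθ => ?_
        have := sin_pos_of_mem_Ioo hθ
        have hnorm : √((ρ * cos θ) ^ 2 + (ρ * sin θ) ^ 2) = ρ := by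
          rw [mul_pow, mul_pow, ← mul_add, cos_sq_add_sin_sq, mul_one, sqrt_sq hρ.le]
        simp only [hG, hnorm]
        rw [← mul_assoc, ← mul_assoc, ← ENNReal.ofReal_mul (by positivity),
          ← ENNReal.ofReal_mul (by positivity), mul_pow, pow_succ', mul_assoc]

lemma lintegral_pow_mul_exp_neg_eq_ofReal_Gamma {d : ℕ} (hd : d ≠ 0) :
    ∫⁻ r in Set.Ioi (0 : ℝ), ENNReal.ofReal (r ^ (d - 1)) * ENNReal.ofReal (exp (-r)) =
      ENNReal.ofReal (Real.Gamma d) := by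
  have hd0 : (0 : ℝ) < d := by positivity
  have hnonneg : ∀ᵐ r ∂volume.restrict (Set.Ioi (0 : ℝ)), 0 ≤ exp (-r) * r ^ (d - 1 : ℝ) :=
    (ae_restrict_mem measurableSet_Ioi).mono fun r (hr : 0 < r) => by positivity
  rw [Real.Gamma_eq_integral hd0,
    ofReal_integral_eq_lintegral_ofReal (Real.GammaIntegral_convergent hd0) hnonneg]
  refine setLIntegral_congr_fun measurableSet_Ioi fun r (hr : 0 < r) => ?_
  rw [← ENNReal.ofReal_mul (by positivity), mul_comm, ← rpow_natCast,
    Nat.cast_pred (Nat.pos_of_ne_zero hd)]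

theorem lintegral_inner_toSphere {x : E} (hx : ‖x‖ = 1) (hE : 2 ≤ finrank ℝ E)
    {f : ℝ → ENNReal} (hf : Measurable f) :
    ∫⁻ e, f ⟪x, (e : E)⟫ ∂(volume : Measure E).toSphere =
      (volume : Measure (ℝ ∙ x)ᗮ).toSphere Set.univ *
        ∫⁻ t, f t ∂jacobiMeasure ((finrank ℝ E - 3 : ℝ) / 2) ((finrank ℝ E - 3 : ℝ) / 2) := by
  have : Nontrivial E := nontrivial_of_finrank_pos (R := ℝ) (by omega)
  set A := ENNReal.ofReal (Real.Gamma (finrank ℝ E))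
  have hA0 : A ≠ 0 := (ENNReal.ofReal_pos.2 (Gamma_pos_of_pos (by positivity))).ne'
  set F : ℝ → ℝ → ENNReal := fun a r => ENNReal.ofReal (exp (-r)) * f (a / r)
  have hF : Measurable (Function.uncurry F) := by
    simp only [F, Function.uncurry_def]
    fun_prop
  have hradial (c : ENNReal) : ∫⁻ r in Set.Ioi (0 : ℝ), ENNReal.ofReal (r ^ (finrank ℝ E - 1)) *
      (ENNReal.ofReal (exp (-r)) * c) = A * c := by
    simp only [← mul_assoc]
    rw [lintegral_mul_const _ (by fun_prop),
      lintegral_pow_mul_exp_neg_eq_ofReal_Gamma (by omega)]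
  refine (ENNReal.mul_right_inj hA0 ENNReal.ofReal_ne_top).1 ?_
  calc A * ∫⁻ e, f ⟪x, (e : E)⟫ ∂(volume : Measure E).toSphere = ∫⁻ v, F ⟪x, v⟫ ‖v‖ := by
        have hFm : Measurable fun v : E => F ⟪x, v⟫ ‖v‖ := by fun_prop
        rw [lintegral_eq_lintegral_toSphere _ hFm, ← lintegral_const_mul _ (by fun_prop)]
        congr! 2 with e
        rw [← hradial]
        refine setLIntegral_congr_fun measurableSet_Ioi fun r (hr : 0 < r) => ?_
        simp [F, norm_smul, abs_of_pos hr, inner_smul_right, hr.ne']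
    _ = _ := by
        rw [lintegral_inner_norm_eq_polar hx hE hF, mul_left_comm]
        congr 1
        rw [← hradial]
        refine setLIntegral_congr_fun measurableSet_Ioi fun ρ (hρ : 0 < ρ) => ?_
        simp only [F, mul_div_cancel_left₀ _ hρ.ne', mul_left_comm _ (ENNReal.ofReal (exp (-ρ)))]
        rw [lintegral_const_mul' _ _ ENNReal.ofReal_ne_top, lintegral_sin_pow_mul_comp_cos _ hf,
          Nat.cast_sub hE, show ((finrank ℝ E : ℝ) - (2 : ℕ) - 1) / 2 = (finrank ℝ E - 3) / 2 by
            push_cast; ring, mul_left_comm]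

end PolarCoordinates

section Gegenbauer

open Polynomial

/-- The ultraspherical weight `(1 - t²)^((d-3)/2) dt` on `(-1, 1)`, proportional to the law of an
inner product `⟪x, e⟫` with `x` fixed and `e` uniform on the unit sphere of `ℝ^d`. -/
def gegenbauerMeasure (d : ℕ) : Measure ℝ :=
  jacobiMeasure ((d - 3 : ℝ) / 2) ((d - 3 : ℝ) / 2)

/-- The zonal polynomial of degree `k` for the unit sphere of `ℝ^d`, in the Jacobi
normalization. -/
def gegenbauerPoly (d k : ℕ) : ℝ[X] :=
  jacobiPoly ((d - 3 : ℝ) / 2) ((d - 3 : ℝ) / 2) k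

lemma neg_one_lt_gegenbauer_exponent {d : ℕ} (hd : 2 ≤ d) : -1 < (d - 3 : ℝ) / 2 := by
  have : (2 : ℝ) ≤ d := by exact_mod_cast hd
  linarith

lemma gegenbauerMeasure_real_univ_pos {d : ℕ} (hd : 2 ≤ d) :
    0 < (gegenbauerMeasure d).real Set.univ := by
  have hα := neg_one_lt_gegenbauer_exponent hd
  simpa [gegenbauerMeasure, Measure.real] using
    integral_eval_jacobiMeasure_pos hα hα one_ne_zero (by simp)

end Gegenbauer

section UniformMeasure

open Module
open scoped Pointwise

variable (E : Type*) [NormedAddCommGroup E] [InnerProductSpace ℝ E] [FiniteDimensional ℝ E]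
  [MeasurableSpace E] [BorelSpace E]

/-- The normalized surface measure on the unit sphere of `E`; a probability measure as soon as
`E` is nontrivial. -/
def sphereUniform : Measure (Metric.sphere (0 : E) 1) :=
  ((volume : Measure E).toSphere Set.univ)⁻¹ • (volume : Measure E).toSphere

instance isProbabilityMeasure_sphereUniform [Nontrivial E] :
    IsProbabilityMeasure (sphereUniform E) :=
  ⟨ENNReal.inv_mul_cancel (Measure.measure_univ_ne_zero.2 (Measure.toSphere_ne_zero _))
    (measure_ne_top _ _)⟩

variable {E}

lemma integral_comp_linearIsometryEquiv_sphereUniform (A : E ≃ₗᵢ[ℝ] E) (f : E → ℝ) :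
    ∫ e, f (A (e : E)) ∂sphereUniform E = ∫ e, f (e : E) ∂sphereUniform E := by
  set T : Metric.sphere (0 : E) 1 ≃ₜ Metric.sphere (0 : E) 1 :=
    A.toHomeomorph.subtype fun e => by simp
  have hT : MeasurePreserving T (volume : Measure E).toSphere (volume : Measure E).toSphere := by
    refine ⟨T.continuous.measurable, Measure.ext fun s hs => ?_⟩
    have himage : (↑) '' s = A '' ((↑) '' (T ⁻¹' s) : Set E) := by
      ext v
      constructor
      · rintro ⟨e, he, rfl⟩
        exact ⟨T.symm e, ⟨T.symm e, by simpa using he, rfl⟩, A.apply_symm_apply e⟩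
      · rintro ⟨_, ⟨e, he, rfl⟩, rfl⟩
        exact ⟨T e, he, rfl⟩
    have hcone : Set.Ioo (0 : ℝ) 1 • (A '' ((↑) '' (T ⁻¹' s) : Set E)) =
        A.symm ⁻¹' (Set.Ioo (0 : ℝ) 1 • ((↑) '' (T ⁻¹' s))) := by
      rw [← A.image_eq_preimage_symm]
      exact (Set.image_image2_distrib_right (map_smul A)).symm
    rw [Measure.map_apply T.continuous.measurable hs,
      Measure.toSphere_apply' _ (T.continuous.measurable hs), Measure.toSphere_apply' _ hs,
      himage, hcone, A.symm.measurePreserving.measure_preimage_emb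
        A.symm.toHomeomorph.measurableEmbedding]
  exact (hT.smul_measure _).integral_comp T.measurableEmbedding fun e => f e

lemma ae_sphereUniform_notMem {V : Submodule ℝ E} (hV : V ≠ ⊤) :
    ∀ᵐ e : Metric.sphere (0 : E) 1 ∂sphereUniform E, (e : E) ∉ V := by
  set s : Set (Metric.sphere (0 : E) 1) := (↑) ⁻¹' (V : Set E)
  have hs : MeasurableSet s :=
    measurable_subtype_coe V.closed_of_finiteDimensional.measurableSet
  have hcone : Set.Ioo (0 : ℝ) 1 • ((↑) '' s) ⊆ (V : Set E) := by
    rintro _ ⟨r, -, _, ⟨e, he, rfl⟩, rfl⟩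
    exact V.smul_mem r he
  have hnull : (volume : Measure E).toSphere s = 0 := by
    rw [Measure.toSphere_apply' _ hs,
      measure_mono_null hcone (Measure.addHaar_submodule _ V hV), mul_zero]
  exact Measure.smul_absolutelyContinuous (measure_eq_zero_iff_ae_notMem.1 hnull)

theorem map_inner_sphereUniform {x : E} (hx : ‖x‖ = 1) (hE : 2 ≤ finrank ℝ E) :
    (sphereUniform E).map (fun e : Metric.sphere (0 : E) 1 => ⟪x, (e : E)⟫) =
      (gegenbauerMeasure (finrank ℝ E) Set.univ)⁻¹ • gegenbauerMeasure (finrank ℝ E) := by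
  have : Nontrivial E := nontrivial_of_finrank_pos (R := ℝ) (by omega)
  set c := ((volume : Measure E).toSphere Set.univ)⁻¹ *
    (volume : Measure (ℝ ∙ x)ᗮ).toSphere Set.univ
  set μ := gegenbauerMeasure (finrank ℝ E) with hμ
  have hinner : Measurable fun e : Metric.sphere (0 : E) 1 => ⟪x, (e : E)⟫ := by fun_prop
  have hmap : (sphereUniform E).map (fun e : Metric.sphere (0 : E) 1 => ⟪x, (e : E)⟫) = c • μ := by
    refine Measure.ext_of_lintegral _ fun f hf => ?_
    rw [lintegral_map hf hinner, sphereUniform, lintegral_smul_measure, lintegral_smul_measure,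
      lintegral_inner_toSphere hx hE hf, smul_eq_mul, smul_eq_mul, mul_assoc, hμ,
      gegenbauerMeasure]
  have hmass : c * μ Set.univ = 1 := by
    rw [← smul_eq_mul, ← Measure.smul_apply, ← hmap]
    exact (Measure.isProbabilityMeasure_map hinner.aemeasurable).measure_univ
  rw [hmap, ENNReal.eq_inv_of_mul_eq_one_left hmass]

lemma integral_gegenbauerMeasure {x : E} (hx : ‖x‖ = 1) (hE : 2 ≤ finrank ℝ E) {f : ℝ → ℝ}
    (hf : AEStronglyMeasurable f (gegenbauerMeasure (finrank ℝ E))) :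
    ∫ t, f t ∂gegenbauerMeasure (finrank ℝ E) =
      (gegenbauerMeasure (finrank ℝ E)).real Set.univ *
        ∫ e, f ⟪x, (e : E)⟫ ∂sphereUniform E := by
  rw [← integral_map (φ := fun e : Metric.sphere (0 : E) 1 => ⟪x, (e : E)⟫) (by fun_prop)
    (by rw [map_inner_sphereUniform hx hE]; exact hf.smul_measure _),
    map_inner_sphereUniform hx hE, integral_smul_measure,
    ENNReal.toReal_inv, smul_eq_mul, ← Measure.real,
    mul_inv_cancel_left₀ (gegenbauerMeasure_real_univ_pos hE).ne']

lemma integrable_comp_inner_sphereUniform {x : E} (hx : ‖x‖ = 1) (hE : 2 ≤ finrank ℝ E)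
    {f : ℝ → ℝ} (hf : Integrable f (gegenbauerMeasure (finrank ℝ E))) :
    Integrable (fun e : Metric.sphere (0 : E) 1 => f ⟪x, (e : E)⟫) (sphereUniform E) := by
  refine Integrable.comp_measurable (f := fun e : Metric.sphere (0 : E) 1 => ⟪x, (e : E)⟫) ?_
    (by fun_prop)
  rw [map_inner_sphereUniform hx hE]
  refine hf.smul_measure (ENNReal.inv_ne_top.2 fun h => ?_)
  simpa [Measure.real, h] using gegenbauerMeasure_real_univ_pos hE

end UniformMeasure

section Reflections

variable {E : Type*} [NormedAddCommGroup E] [InnerProductSpace ℝ E]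

lemma exists_linearIsometryEquiv_apply_eq {x w w' : E} (hnorm : ‖w‖ = ‖w'‖)
    (hinner : ⟪x, w⟫ = ⟪x, w'⟫) : ∃ A : E ≃ₗᵢ[ℝ] E, A x = x ∧ A w = w' := by
  refine ⟨(ℝ ∙ (w - w'))ᗮ.reflection, Submodule.reflection_mem_subspace_eq_self ?_,
    Submodule.reflection_sub hnorm⟩
  rw [Submodule.mem_orthogonal_singleton_iff_inner_left, inner_sub_right, hinner, sub_self]

lemma exists_linearIsometryEquiv_apply_pair_eq {x y x' y' : E} (hx : ‖x‖ = ‖x'‖)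
    (hy : ‖y‖ = ‖y'‖) (hxy : ⟪x, y⟫ = ⟪x', y'⟫) : ∃ A : E ≃ₗᵢ[ℝ] E, A x = x' ∧ A y = y' := by
  obtain ⟨A, -, hA⟩ := exists_linearIsometryEquiv_apply_eq (x := 0) hx (by simp)
  obtain ⟨B, hBx, hBy⟩ := exists_linearIsometryEquiv_apply_eq (x := x') (w := A y) (w' := y')
    (by rw [A.norm_map, hy]) (by rw [← hA, A.inner_map_map, hxy, hA])
  exact ⟨A.trans B, by simp [hA, hBx], by simp [hBy]⟩

end Reflections

section ZonalMoments

open Module Polynomial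

variable {E : Type*} [NormedAddCommGroup E] [InnerProductSpace ℝ E]

lemma norm_starProjection_orthogonal_sq {x : E} (hx : ‖x‖ = 1) (e : Metric.sphere (0 : E) 1) :
    ‖(ℝ ∙ x)ᗮ.starProjection (e : E)‖ ^ 2 = 1 - ⟪x, (e : E)⟫ ^ 2 := by
  have hpyth := (ℝ ∙ x).norm_sq_eq_add_norm_sq_starProjection (e : E)
  rw [Submodule.starProjection_unit_singleton ℝ hx, norm_smul, hx, mem_sphere_zero_iff_norm.1 e.2,
    mul_one, norm_eq_abs, sq_abs] at hpyth
  linarith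

variable [FiniteDimensional ℝ E] [MeasurableSpace E] [BorelSpace E]

lemma integral_inner_inner_sphereUniform_congr {x w w' : E} (hnorm : ‖w‖ = ‖w'‖)
    (hinner : ⟪x, w⟫ = ⟪x, w'⟫) (f : ℝ → ℝ → ℝ) :
    ∫ e, f ⟪x, (e : E)⟫ ⟪w, (e : E)⟫ ∂sphereUniform E =
      ∫ e, f ⟪x, (e : E)⟫ ⟪w', (e : E)⟫ ∂sphereUniform E := by
  obtain ⟨A, hAx, hAw⟩ := exists_linearIsometryEquiv_apply_eq hnorm hinner
  rw [← integral_comp_linearIsometryEquiv_sphereUniform A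
    fun e => f ⟪x, e⟫ ⟪w', e⟫]
  congr! 2 with e
  rw [← A.inner_map_map x, ← A.inner_map_map w, hAx, hAw]

lemma norm_pow_mul_integral_mul_inner_pow_comm {x w w' : E} (hw : ⟪x, w⟫ = 0) (hw' : ⟪x, w'⟫ = 0)
    (φ : ℝ → ℝ) (j : ℕ) :
    ‖w'‖ ^ j * ∫ e, φ ⟪x, (e : E)⟫ * ⟪w, (e : E)⟫ ^ j ∂sphereUniform E =
      ‖w‖ ^ j * ∫ e, φ ⟪x, (e : E)⟫ * ⟪w', (e : E)⟫ ^ j ∂sphereUniform E := by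
  have hscale := integral_inner_inner_sphereUniform_congr (x := x) (w := ‖w'‖ • w)
    (w' := ‖w‖ • w') (by simp [norm_smul, mul_comm]) (by simp [inner_smul_right, hw, hw'])
    fun a b => φ a * b ^ j
  simpa only [real_inner_smul_left, mul_pow, mul_left_comm (φ _), integral_const_mul] using hscale

lemma integrable_mul_of_continuous {X : Type*} [TopologicalSpace X] [CompactSpace X]
    [MeasurableSpace X] [OpensMeasurableSpace X] {μ : Measure X} {f g : X → ℝ}
    (hf : Integrable f μ) (hg : Continuous g) : Integrable (fun p => f p * g p) μ := by
  obtain ⟨C, hC⟩ := isCompact_univ.exists_bound_of_continuousOn hg.continuousOn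
  exact hf.mul_bdd hg.aestronglyMeasurable (ae_of_all _ fun p => hC p trivial)

lemma integral_norm_pow_mul_integral_mul_inner_pow {x w : E} (hx : ‖x‖ = 1) (hw : ⟪x, w⟫ = 0)
    {φ : ℝ → ℝ} (hφ : Integrable (fun e : Metric.sphere (0 : E) 1 => φ ⟪x, (e : E)⟫)
      (sphereUniform E)) (j : ℕ) :
    (∫ e, ‖(ℝ ∙ x)ᗮ.starProjection (e : E)‖ ^ j ∂sphereUniform E) *
        ∫ e, φ ⟪x, (e : E)⟫ * ⟪w, (e : E)⟫ ^ j ∂sphereUniform E =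
      ‖w‖ ^ j * ((∫ e, ⟪x, (e : E)⟫ ^ j ∂sphereUniform E) *
        ∫ e, φ ⟪x, (e : E)⟫ * ‖(ℝ ∙ x)ᗮ.starProjection (e : E)‖ ^ j ∂sphereUniform E) := by
  have : Nontrivial E := ⟨x, 0, norm_ne_zero_iff.1 (by simp [hx])⟩
  set P := (ℝ ∙ x)ᗮ.starProjection
  have hP (v : E) : ⟪x, P v⟫ = 0 :=
    Submodule.mem_orthogonal_singleton_iff_inner_right.1 (Submodule.starProjection_apply_mem _ v)
  have hsymm (u v : E) : ⟪P u, v⟫ = ⟪P v, u⟫ := by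
    rw [Submodule.inner_starProjection_left_eq_right, real_inner_comm]
  have hmoment (v : E) : ∫ e, ⟪P v, (e : E)⟫ ^ j ∂sphereUniform E =
      ‖P v‖ ^ j * ∫ e, ⟪x, (e : E)⟫ ^ j ∂sphereUniform E := by
    simpa [hx] using norm_pow_mul_integral_mul_inner_pow_comm (x := (0 : E)) (w := P v) (w' := x)
      (inner_zero_left _) (inner_zero_left _) 1 j
  have hint : Integrable (Function.uncurry fun e' e : Metric.sphere (0 : E) 1 =>
      φ ⟪x, (e : E)⟫ * ⟪P e', (e : E)⟫ ^ j) ((sphereUniform E).prod (sphereUniform E)) :=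
    integrable_mul_of_continuous (hφ.comp_snd _) (by fun_prop)
  calc _ = ∫ e', ‖P e'‖ ^ j * ∫ e, φ ⟪x, (e : E)⟫ * ⟪w, (e : E)⟫ ^ j ∂sphereUniform E
          ∂sphereUniform E := (integral_mul_const _ _).symm
    _ = ‖w‖ ^ j * ∫ e', ∫ e, φ ⟪x, (e : E)⟫ * ⟪P e', (e : E)⟫ ^ j ∂sphereUniform E
          ∂sphereUniform E := by
        simp only [norm_pow_mul_integral_mul_inner_pow_comm hw (hP _), integral_const_mul]
    _ = ‖w‖ ^ j * ∫ e, φ ⟪x, (e : E)⟫ * ∫ e', ⟪P e, (e' : E)⟫ ^ j ∂sphereUniform E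
          ∂sphereUniform E := by
        rw [integral_integral_swap hint]
        simp only [integral_const_mul]
        congr! 7 with e
        exact hsymm _ _
    _ = _ := by
        simp_rw [hmoment, ← mul_assoc, integral_mul_const]
        ring

lemma integral_norm_starProjection_orthogonal_pow_pos (x : E) (hE : 2 ≤ finrank ℝ E) (j : ℕ) :
    0 < ∫ e, ‖(ℝ ∙ x)ᗮ.starProjection (e : E)‖ ^ j ∂sphereUniform E := by
  have : Nontrivial E := nontrivial_of_finrank_pos (R := ℝ) (by omega)
  have hspan : (ℝ ∙ x) ≠ ⊤ := (span_lt_top_of_card_lt_finrank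
    (by simpa using (by omega : 1 < finrank ℝ E))).ne
  have hcont : Continuous fun e : Metric.sphere (0 : E) 1 =>
    ‖(ℝ ∙ x)ᗮ.starProjection (e : E)‖ ^ j := by fun_prop
  refine (integral_nonneg fun e => by positivity).lt_of_ne' fun hzero => ?_
  obtain ⟨e, he, heq⟩ := ((ae_sphereUniform_notMem hspan).and
    ((integral_eq_zero_iff_of_nonneg (fun e => by positivity)
      (hcont.integrable_of_hasCompactSupport (.of_compactSpace _))).1 hzero)).exists
  have hmem := (Submodule.starProjection_apply_eq_zero_iff _).1
    (norm_eq_zero.1 (eq_zero_of_pow_eq_zero heq))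
  exact he (by rwa [Submodule.orthogonal_orthogonal] at hmem)

lemma integral_inner_pow_sphereUniform_of_odd (x : E) {j : ℕ} (hj : Odd j) :
    ∫ e, ⟪x, (e : E)⟫ ^ j ∂sphereUniform E = 0 := by
  have := integral_inner_inner_sphereUniform_congr (x := 0) (norm_neg x) (by simp)
    fun _ b => b ^ j
  simp only [inner_neg_left, hj.neg_pow, integral_neg] at this
  linarith

lemma exists_polynomial_integral_mul_inner_pow_of_inner_eq_zero {x : E} (hx : ‖x‖ = 1)
    (hE : 2 ≤ finrank ℝ E) (j : ℕ) :
    ∃ q : ℝ[X], q.natDegree ≤ j ∧ q.eval 1 = 0 ^ j ∧ ∀ (w : E) (φ : ℝ → ℝ), ⟪x, w⟫ = 0 →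
      Integrable (fun e : Metric.sphere (0 : E) 1 => φ ⟪x, (e : E)⟫) (sphereUniform E) →
      ∫ e, φ ⟪x, (e : E)⟫ * ⟪w, (e : E)⟫ ^ j ∂sphereUniform E =
        ‖w‖ ^ j * ∫ e, φ ⟪x, (e : E)⟫ * q.eval ⟪x, (e : E)⟫ ∂sphereUniform E := by
  have : Nontrivial E := nontrivial_of_finrank_pos (R := ℝ) (by omega)
  set D := ∫ e, ‖(ℝ ∙ x)ᗮ.starProjection (e : E)‖ ^ j ∂sphereUniform E with hD
  have hDpos : 0 < D := integral_norm_starProjection_orthogonal_pow_pos x hE j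
  have hmoments (w : E) (φ : ℝ → ℝ) := integral_norm_pow_mul_integral_mul_inner_pow hx (w := w)
    (φ := φ) (j := j)
  rw [← hD] at hmoments
  obtain hj | hj := Nat.even_or_odd j
  · obtain ⟨l, rfl⟩ := hj.two_dvd
    generalize hκ : ∫ e, ⟪x, (e : E)⟫ ^ (2 * l) ∂sphereUniform E = κ at hmoments
    refine ⟨C (κ / D) * (1 - X ^ 2) ^ l, ?_, ?_, fun w φ hw hφ => ?_⟩
    · compute_degree
      omega
    · cases l <;> simp [← hκ, hD]
    · refine mul_left_cancel₀ hDpos.ne' ((hmoments w φ hw hφ).trans ?_)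
      simp only [pow_mul ‖(ℝ ∙ x)ᗮ.starProjection _‖, norm_starProjection_orthogonal_sq hx,
        eval_mul, eval_C, eval_pow, eval_sub, eval_one, eval_X, mul_left_comm _ (κ / D),
        integral_const_mul]
      field_simp
  · refine ⟨0, by simp, by simp [hj.pos.ne'], fun w φ hw hφ => mul_left_cancel₀ hDpos.ne' ?_⟩
    rw [hmoments w φ hw hφ, integral_inner_pow_sphereUniform_of_odd x hj]
    simp

lemma exists_polynomial_integral_mul_inner_pow {x : E} (hx : ‖x‖ = 1) (hE : 2 ≤ finrank ℝ E)
    (y : E) (d : ℕ) : ∃ Q : ℝ[X], Q.natDegree ≤ d ∧ Q.eval 1 = ⟪x, y⟫ ^ d ∧ ∀ φ : ℝ → ℝ,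
      Integrable (fun e : Metric.sphere (0 : E) 1 => φ ⟪x, (e : E)⟫) (sphereUniform E) →
      ∫ e, φ ⟪x, (e : E)⟫ * ⟪y, (e : E)⟫ ^ d ∂sphereUniform E =
        ∫ e, φ ⟪x, (e : E)⟫ * Q.eval ⟪x, (e : E)⟫ ∂sphereUniform E := by
  choose q hqdeg hq1 hq using exists_polynomial_integral_mul_inner_pow_of_inner_eq_zero hx hE
  set w := y - ⟪x, y⟫ • x with hw
  have hxw : ⟪x, w⟫ = 0 := by simp [hw, inner_sub_right, inner_smul_right, hx]
  have hinner (e : E) : ⟪y, e⟫ = ⟪x, y⟫ * ⟪x, e⟫ + ⟪w, e⟫ := by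
    simp [hw, inner_sub_left, real_inner_smul_left]
  set a : ℕ → ℝ := fun i => ⟪x, y⟫ ^ i * d.choose i with ha
  refine ⟨∑ i ∈ Finset.range (d + 1), C (a i * ‖w‖ ^ (d - i)) * (X ^ i * q (d - i)),
    ?_, ?_, fun φ hφ => ?_⟩
  · refine natDegree_sum_le_of_forall_le _ _ fun i hi => ?_
    have hid := Finset.mem_range_succ_iff.1 hi
    have := hqdeg (d - i)
    compute_degree
    omega
  · rw [eval_finsetSum, Finset.sum_eq_single_of_mem d (by simp)]
    · simp [hq1, ha]
    · intro i hi hne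
      have : d - i ≠ 0 := by have := Finset.mem_range.1 hi; omega
      simp [hq1, this]
  · have hterm (i : ℕ) :
        ∫ e, φ ⟪x, (e : E)⟫ * (a i * (⟪x, (e : E)⟫ ^ i * ⟪w, (e : E)⟫ ^ (d - i)))
          ∂sphereUniform E =
        ∫ e, φ ⟪x, (e : E)⟫ * (a i * ‖w‖ ^ (d - i) * (⟪x, (e : E)⟫ ^ i *
          (q (d - i)).eval ⟪x, (e : E)⟫)) ∂sphereUniform E := by
      have hi := hq (d - i) w (fun t => φ t * t ^ i) hxw
        (integrable_mul_of_continuous hφ (by fun_prop))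
      simp only [mul_left_comm (φ _), integral_const_mul, mul_assoc] at hi ⊢
      rw [hi]
    simp only [hinner, add_pow, mul_pow, eval_finsetSum, eval_mul, eval_C, eval_pow, eval_X,
      Finset.mul_sum]
    rw [integral_finsetSum, integral_finsetSum]
    · refine Finset.sum_congr rfl fun i _ => ?_
      rw [← hterm]
      congr! 2 with e
      ring
    all_goals exact fun i _ => integrable_mul_of_continuous hφ (by fun_prop)

theorem exists_polynomial_integral_mul_eval_inner {x : E} (hx : ‖x‖ = 1) (hE : 2 ≤ finrank ℝ E)
    (y : E) (f : ℝ[X]) :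
    ∃ Q : ℝ[X], Q.degree ≤ f.degree ∧ Q.eval 1 = f.eval ⟪x, y⟫ ∧ ∀ φ : ℝ → ℝ,
      Integrable (fun e : Metric.sphere (0 : E) 1 => φ ⟪x, (e : E)⟫) (sphereUniform E) →
      ∫ e, φ ⟪x, (e : E)⟫ * f.eval ⟪y, (e : E)⟫ ∂sphereUniform E =
        ∫ e, φ ⟪x, (e : E)⟫ * Q.eval ⟪x, (e : E)⟫ ∂sphereUniform E := by
  choose q hqdeg hq1 hq using exists_polynomial_integral_mul_inner_pow hx hE y
  refine ⟨∑ i ∈ f.support, f.coeff i • q i, ?_, ?_, fun φ hφ => ?_⟩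
  · refine (degree_sum_le _ _).trans (Finset.sup_le fun i hi => ?_)
    exact (degree_smul_le _ _).trans
      ((degree_le_of_natDegree_le (hqdeg i)).trans (le_degree_of_mem_supp i hi))
  · simp only [eval_finsetSum, eval_smul, smul_eq_mul, hq1, eval_eq_sum (p := f), sum_def]
  · simp only [eval_eq_sum (p := f), sum_def, eval_finsetSum, eval_smul, smul_eq_mul,
      Finset.mul_sum]
    rw [integral_finsetSum, integral_finsetSum]
    · simp only [mul_left_comm (φ _), integral_const_mul, hq _ φ hφ]
    all_goals exact fun i _ => integrable_mul_of_continuous hφ (by fun_prop)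

lemma integral_eval_gegenbauerPoly_inner_mul_eq_zero {z : E} (hz : ‖z‖ = 1)
    (hE : 2 ≤ finrank ℝ E) (x : E) {k : ℕ} {p : ℝ[X]} (hp : p ∈ degreeLT ℝ k) :
    ∫ e, (gegenbauerPoly (finrank ℝ E) k).eval ⟪z, (e : E)⟫ * p.eval ⟪x, (e : E)⟫
      ∂sphereUniform E = 0 := by
  have : Nontrivial E := nontrivial_of_finrank_pos (R := ℝ) (by omega)
  have hα := neg_one_lt_gegenbauer_exponent hE
  obtain ⟨R, hRdeg, -, hR⟩ := exists_polynomial_integral_mul_eval_inner hz hE x p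
  rw [hR (fun t => (gegenbauerPoly (finrank ℝ E) k).eval t)
    (Continuous.integrable_of_hasCompactSupport (by fun_prop) (.of_compactSpace _))]
  have := integral_gegenbauerMeasure hz hE
    (f := fun t => (gegenbauerPoly (finrank ℝ E) k).eval t * R.eval t)
    (Continuous.aestronglyMeasurable (by fun_prop))
  refine (mul_eq_zero_iff_left (gegenbauerMeasure_real_univ_pos hE).ne').1 (this.symm.trans ?_)
  exact integral_jacobiPoly_mul_eq_zero hα hα (mem_degreeLT.2 (hRdeg.trans_lt (mem_degreeLT.1 hp)))

theorem funk_hecke {x z : E} (hx : ‖x‖ = 1) (hz : ‖z‖ = 1) (hE : 2 ≤ finrank ℝ E) (k : ℕ)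
    {φ : ℝ → ℝ} (hφ : Integrable (fun e : Metric.sphere (0 : E) 1 => φ ⟪x, (e : E)⟫)
      (sphereUniform E)) :
    (gegenbauerPoly (finrank ℝ E) k).eval 1 *
        ∫ e, φ ⟪x, (e : E)⟫ * (gegenbauerPoly (finrank ℝ E) k).eval ⟪z, (e : E)⟫
          ∂sphereUniform E =
      (gegenbauerPoly (finrank ℝ E) k).eval ⟪x, z⟫ *
        ∫ e, φ ⟪x, (e : E)⟫ * (gegenbauerPoly (finrank ℝ E) k).eval ⟪x, (e : E)⟫
          ∂sphereUniform E := by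
  have : Nontrivial E := nontrivial_of_finrank_pos (R := ℝ) (by omega)
  have hα := neg_one_lt_gegenbauer_exponent hE
  set P := gegenbauerPoly (finrank ℝ E) k with hP
  obtain ⟨Q, hQdeg, hQ1, hQ⟩ := exists_polynomial_integral_mul_eval_inner hx hE z P
  have hQmem : Q ∈ degreeLT ℝ (k + 1) :=
    mem_degreeLT.2 (hQdeg.trans_lt (mem_degreeLT.1 (jacobiPoly_mem_degreeLT _ _ k)))
  obtain ⟨c, rfl⟩ := exists_eq_C_mul_jacobiPoly hα hα hQmem fun p hp => by
    rw [← gegenbauerMeasure, integral_gegenbauerMeasure hx hE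
      (Continuous.aestronglyMeasurable (by fun_prop))]
    simp only [mul_comm (Q.eval _)]
    rw [← hQ (fun t => p.eval t)
      (Continuous.integrable_of_hasCompactSupport (by fun_prop) (.of_compactSpace _))]
    simp only [mul_comm (p.eval _)]
    rw [integral_eval_gegenbauerPoly_inner_mul_eq_zero hz hE x hp, mul_zero]
  rw [← gegenbauerPoly, ← hP] at hQ hQ1
  simp only [hQ φ hφ, ← hQ1, eval_mul, eval_C, mul_left_comm _ c, integral_const_mul]
  ring

end ZonalMoments

section PositiveKernels

variable {Ω : Type*} [MeasurableSpace Ω] {σ : Measure Ω} [IsProbabilityMeasure σ]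

lemma measurePreserving_eval_prodMk_eval {ι : Type*} [Fintype ι] {i j : ι} (hij : i ≠ j) :
    MeasurePreserving (fun ω : ι → Ω => (ω i, ω j)) (Measure.pi fun _ => σ) (σ.prod σ) := by
  have hindep : ProbabilityTheory.IndepFun (fun ω : ι → Ω => ω i) (fun ω => ω j)
      (Measure.pi fun _ => σ) :=
    (ProbabilityTheory.iIndepFun_pi (X := fun _ => id) fun _ => aemeasurable_id).indepFun hij
  refine ⟨by fun_prop, ?_⟩
  rw [(ProbabilityTheory.indepFun_iff_map_prod_eq_prod_map_map
    (measurable_pi_apply i).aemeasurable (measurable_pi_apply j).aemeasurable).1 hindep]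
  exact congr_arg₂ Measure.prod (measurePreserving_eval (fun _ => σ) i).map_eq
    (measurePreserving_eval (fun _ => σ) j).map_eq

lemma integral_sum_sum_eval_eval {K : Ω × Ω → ℝ} (hK : Integrable K (σ.prod σ))
    (hdiag : Integrable (fun x => K (x, x)) σ) (M : ℕ) :
    ∫ ω, ∑ i, ∑ j, K (ω i, ω j) ∂(Measure.pi fun _ : Fin M => σ) =
      M * (∫ x, K (x, x) ∂σ + (M - 1) * ∫ p, K p ∂σ.prod σ) := by
  have heval (i : Fin M) := measurePreserving_eval (fun _ : Fin M => σ) i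
  have hint (i j : Fin M) : Integrable (fun ω => K (ω i, ω j)) (Measure.pi fun _ => σ) := by
    rcases eq_or_ne i j with rfl | hij
    · exact (heval i).integrable_comp_of_integrable hdiag
    · exact (measurePreserving_eval_prodMk_eval hij).integrable_comp_of_integrable hK
  have hval (i j : Fin M) : ∫ ω, K (ω i, ω j) ∂(Measure.pi fun _ => σ) =
      ∫ p, K p ∂σ.prod σ + if i = j then ∫ x, K (x, x) ∂σ - ∫ p, K p ∂σ.prod σ else 0 := by
    split_ifs with hij
    · subst hij
      have hmap := (heval i).map_eq
      rw [add_sub_cancel, ← integral_map (φ := Function.eval i) (f := fun x => K (x, x))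
        (heval i).aemeasurable (by rw [hmap]; exact hdiag.aestronglyMeasurable), hmap]
    · have hpair := measurePreserving_eval_prodMk_eval (σ := σ) hij
      rw [add_zero, ← integral_map (f := K) hpair.aemeasurable
        (hpair.map_eq ▸ hK.aestronglyMeasurable), hpair.map_eq]
  simp only [integral_finsetSum _ fun i _ => integrable_finsetSum _ fun j _ => hint i j,
    integral_finsetSum _ fun j _ => hint _ j, hval, Finset.sum_add_distrib, Finset.sum_const,
    Finset.card_univ, Fintype.card_fin, nsmul_eq_mul, Finset.sum_ite_eq, Finset.mem_univ, if_true]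
  ring

/-- The double integral is recovered from finite quadratic forms by sampling independent points:
the diagonal only contributes to lower order in the number of points. -/
theorem integral_prod_self_nonneg {K : Ω × Ω → ℝ} (hK : Integrable K (σ.prod σ))
    (hdiag : Integrable (fun x => K (x, x)) σ)
    (hpos : ∀ M : ℕ, ∀ᵐ ω ∂(Measure.pi fun _ : Fin M => σ), 0 ≤ ∑ i, ∑ j, K (ω i, ω j)) :
    0 ≤ ∫ p, K p ∂σ.prod σ := by
  set I := ∫ p, K p ∂σ.prod σ
  set D := ∫ x, K (x, x) ∂σ
  have hsample (M : ℕ) : 0 ≤ D + M * I := by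
    have h := integral_nonneg_of_ae (hpos (M + 1))
    rw [integral_sum_sum_eval_eval hK hdiag] at h
    push_cast at h
    rw [add_sub_cancel_right] at h
    exact nonneg_of_mul_nonneg_right h (by positivity)
  by_contra! hneg
  obtain ⟨M, hM⟩ := Archimedean.arch (D + 1) (neg_pos.2 hneg)
  rw [nsmul_eq_mul] at hM
  linarith [hsample M]

end PositiveKernels

section Schoenberg

open Module Polynomial

variable {E : Type*} [NormedAddCommGroup E] [InnerProductSpace ℝ E] [FiniteDimensional ℝ E]
  [MeasurableSpace E] [BorelSpace E]

lemma integral_sq_eval_gegenbauerPoly_pos {d : ℕ} (hd : 2 ≤ d) (k : ℕ) :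
    0 < ∫ t, (gegenbauerPoly d k).eval t * (gegenbauerPoly d k).eval t ∂gegenbauerMeasure d := by
  have hα := neg_one_lt_gegenbauer_exponent hd
  refine (integral_nonneg fun t => mul_self_nonneg _).lt_of_ne' fun h => ?_
  have hP : gegenbauerPoly d k = 0 := eq_zero_of_integral_mul_self_eq_zero hα hα h
  exact (jacobiPoly_eval_one_pos hα _ k).ne' (by rw [← gegenbauerPoly, hP, eval_zero])

/-- The test function is a zonal polynomial `P(⟪z, ·⟫)`: by the Funk–Hecke formula it is an
eigenfunction of the convolution operator with kernel `h`, whose eigenvalue is, up to a positive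
factor, the Gegenbauer coefficient of `h`. -/
theorem integral_mul_gegenbauerPoly_nonneg (hE : 2 ≤ finrank ℝ E) {h : ℝ → ℝ}
    (hh : Integrable h (gegenbauerMeasure (finrank ℝ E)))
    (hpos : ∀ f : E → ℝ, Continuous f →
      0 ≤ ∫ x, ∫ y, h ⟪(x : E), (y : E)⟫ * (f x * f y) ∂sphereUniform E ∂sphereUniform E)
    (k : ℕ) :
    0 ≤ ∫ t, h t * (gegenbauerPoly (finrank ℝ E) k).eval t
      ∂gegenbauerMeasure (finrank ℝ E) := by
  have : Nontrivial E := nontrivial_of_finrank_pos (R := ℝ) (by omega)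
  obtain ⟨z, hz⟩ := exists_norm_eq E zero_le_one
  set μ := gegenbauerMeasure (finrank ℝ E)
  set P := gegenbauerPoly (finrank ℝ E) k with hP
  have hP1 : 0 < P.eval 1 := jacobiPoly_eval_one_pos (neg_one_lt_gegenbauer_exponent hE) _ k
  have hμ : 0 < μ.real Set.univ := gegenbauerMeasure_real_univ_pos hE
  set c := P.eval 1 * μ.real Set.univ with hc
  have hconv (x : Metric.sphere (0 : E) 1) :
      c * ∫ y, h ⟪(x : E), (y : E)⟫ * (P.eval ⟪z, (x : E)⟫ * P.eval ⟪z, (y : E)⟫)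
        ∂sphereUniform E =
        P.eval ⟪z, (x : E)⟫ * P.eval ⟪z, (x : E)⟫ * ∫ t, h t * P.eval t ∂μ := by
    have hx := mem_sphere_zero_iff_norm.1 x.2
    have hFH := funk_hecke hx hz hE k (integrable_comp_inner_sphereUniform hx hE hh)
    rw [← hP, real_inner_comm] at hFH
    have hcoeff := integral_gegenbauerMeasure hx hE (f := fun t => h t * P.eval t)
      (hh.aestronglyMeasurable.mul P.continuous.aestronglyMeasurable)
    simp only [mul_left_comm (h _), integral_const_mul]
    linear_combination μ.real Set.univ * P.eval ⟪z, (x : E)⟫ * hFH -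
      P.eval ⟪z, (x : E)⟫ * P.eval ⟪z, (x : E)⟫ * hcoeff
  have hPz := integral_gegenbauerMeasure hz hE (f := fun t => P.eval t * P.eval t)
    (Continuous.aestronglyMeasurable (by fun_prop))
  have hsq := pos_of_mul_pos_right (hPz ▸ integral_sq_eval_gegenbauerPoly_pos hE k) hμ.le
  have := mul_nonneg (mul_nonneg hP1.le hμ.le) (hpos (fun e => P.eval ⟪z, e⟫) (by fun_prop))
  rw [← integral_const_mul] at this
  simp only [← hc, hconv, integral_mul_const] at this
  exact nonneg_of_mul_nonneg_right this hsq

end Schoenberg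

section Stiefel

open Module

lemma PosSemidefOnSphere.sum_sum_nonneg {N : ℕ} {g : ℝ → ℝ} (hg : PosSemidefOnSphere N g)
    {V : Type*} [NormedAddCommGroup V] [InnerProductSpace ℝ V] [FiniteDimensional ℝ V]
    (hV : finrank ℝ V = N) {M : ℕ} {w : Fin M → V} (hw : ∀ i, ‖w i‖ = 1) (c : Fin M → ℝ) :
    0 ≤ ∑ i, ∑ j, c i * c j * g ⟪w i, w j⟫ := by
  subst hV
  simpa using hg M (fun i => (stdOrthonormalBasis ℝ V).repr (w i)) c (by simpa using hw)

lemma PosSemidefOnSphere.abs_le {N : ℕ} {g : ℝ → ℝ} (hg : PosSemidefOnSphere N g)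
    {V : Type*} [NormedAddCommGroup V] [InnerProductSpace ℝ V] [FiniteDimensional ℝ V]
    (hV : finrank ℝ V = N) {u v : V} (hu : ‖u‖ = 1) (hv : ‖v‖ = 1) : |g ⟪u, v⟫| ≤ g 1 := by
  have hw : ∀ i, ‖![u, v] i‖ = 1 := by simp [Fin.forall_fin_two, hu, hv]
  have hplus := hg.sum_sum_nonneg hV hw ![1, 1]
  have hminus := hg.sum_sum_nonneg hV hw ![1, -1]
  simp only [Fin.sum_univ_two, Matrix.cons_val_zero, Matrix.cons_val_one,
    real_inner_self_eq_norm_sq, hu, hv, real_inner_comm u v, one_pow] at hplus hminus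
  exact _root_.abs_le.2 ⟨by linarith, by linarith⟩

variable {n m : ℕ} {z : Fin m → EuclideanSpace ℝ (Fin n)} {x y : EuclideanSpace ℝ (Fin n)}

lemma projC_eq_zero_or_norm_projC_eq_one (z : Fin m → EuclideanSpace ℝ (Fin n))
    (x : EuclideanSpace ℝ (Fin n)) : projC z x = 0 ∨ ‖projC z x‖ = 1 := by
  rw [projC]
  rcases eq_or_ne (x - ∑ i, ⟪x, z i⟫ • z i) 0 with h | h
  · exact .inl (by rw [h, smul_zero])
  · exact .inr (norm_smul_inv_norm (𝕜 := ℝ) h)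

lemma norm_projC_of_notMem_span (hx : x ∉ Submodule.span ℝ (Set.range z)) : ‖projC z x‖ = 1 := by
  refine norm_smul_inv_norm (𝕜 := ℝ) (sub_ne_zero.2 fun h => hx ?_)
  rw [h]
  exact Submodule.sum_mem _ fun i _ =>
    Submodule.smul_mem _ _ (Submodule.subset_span (Set.mem_range_self i))

lemma projC_mem_orthogonal_span (hz : Orthonormal ℝ z) (x : EuclideanSpace ℝ (Fin n)) :
    projC z x ∈ (Submodule.span ℝ (Set.range z))ᗮ := by
  refine Submodule.smul_mem _ _ (Submodule.isOrtho_span.2 ?_ (Submodule.mem_span_singleton_self _))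
  rintro _ rfl _ ⟨j, rfl⟩
  rw [inner_sub_left, hz.inner_left_fintype, conj_trivial, sub_self]

lemma finrank_orthogonal_span_range (hz : Orthonormal ℝ z) :
    finrank ℝ (Submodule.span ℝ (Set.range z))ᗮ = n - m := by
  have h := (Submodule.span ℝ (Set.range z)).finrank_add_finrank_orthogonal
  rw [finrank_span_eq_card hz.linearIndependent, finrank_euclideanSpace_fin, Fintype.card_fin] at h
  omega

section Bounds

variable {F : (Fin m → ℝ) → ℝ} {g : ℝ → ℝ} {CF : ℝ}

lemma abs_inner_projC_le (hg : PosSemidefOnSphere (n - m) g) (hz : Orthonormal ℝ z)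
    (x y : EuclideanSpace ℝ (Fin n)) : |g ⟪projC z x, projC z y⟫| ≤ max (g 1) |g 0| := by
  rcases projC_eq_zero_or_norm_projC_eq_one z x with hx | hx
  · exact le_max_of_le_right (by rw [hx, inner_zero_left])
  rcases projC_eq_zero_or_norm_projC_eq_one z y with hy | hy
  · exact le_max_of_le_right (by rw [hy, inner_zero_right])
  exact le_max_of_le_left (hg.abs_le (finrank_orthogonal_span_range hz)
    (u := ⟨_, projC_mem_orthogonal_span hz x⟩) (v := ⟨_, projC_mem_orthogonal_span hz y⟩) hx hy)

lemma abs_hfun_le (hF : ∀ v, |F v| ≤ CF) (hg : PosSemidefOnSphere (n - m) g)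
    (hz : Orthonormal ℝ z) (x y : EuclideanSpace ℝ (Fin n)) :
    |hfun F g x y z| ≤ CF * CF * max (g 1) |g 0| := by
  have hCF : 0 ≤ CF := (abs_nonneg _).trans (hF 0)
  rw [hfun, abs_mul, abs_mul]
  gcongr
  exacts [hF _, hF _, abs_inner_projC_le hg hz x y]

lemma sum_sum_hfun_nonneg (F : (Fin m → ℝ) → ℝ) (hg : PosSemidefOnSphere (n - m) g)
    (hz : Orthonormal ℝ z) {M : ℕ} {x : Fin M → EuclideanSpace ℝ (Fin n)}
    (hx : ∀ i, x i ∉ Submodule.span ℝ (Set.range z)) (c : Fin M → ℝ) :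
    0 ≤ ∑ i, ∑ j, hfun F g (x i) (x j) z * (c i * c j) := by
  refine (hg.sum_sum_nonneg (finrank_orthogonal_span_range hz)
    (w := fun i => ⟨projC z (x i), projC_mem_orthogonal_span hz (x i)⟩)
    (fun i => norm_projC_of_notMem_span (hx i))
    fun i => F (fun l => ⟪x i, z l⟫) * c i).trans_eq ?_
  refine Finset.sum_congr rfl fun i _ => Finset.sum_congr rfl fun j _ => ?_
  rw [hfun, Submodule.coe_inner]
  ring

variable {Ω : Type*} [MeasurableSpace Ω] {X Y : Ω → EuclideanSpace ℝ (Fin n)} {Z : Ω → Stiefel n m}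

lemma measurable_projC (hX : Measurable X) (hZ : Measurable Z) :
    Measurable fun ω => projC (Z ω).1 (X ω) := by
  have hcont : Continuous fun p : (Fin m → EuclideanSpace ℝ (Fin n)) × EuclideanSpace ℝ (Fin n) =>
      p.2 - ∑ i, ⟪p.2, p.1 i⟫ • p.1 i := by fun_prop
  have hresid := hcont.measurable.comp ((measurable_subtype_coe.comp hZ).prodMk hX)
  exact hresid.norm.inv.smul hresid

lemma measurable_hfun (hF : Measurable F) (hg : Measurable g) (hX : Measurable X)
    (hY : Measurable Y) (hZ : Measurable Z) :
    Measurable fun ω => hfun F g (X ω) (Y ω) (Z ω).1 := by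
  have hZi (i : Fin m) : Measurable fun ω => (Z ω).1 i :=
    (measurable_pi_apply i).comp (measurable_subtype_coe.comp hZ)
  have hFX := hF.comp (measurable_pi_lambda _ fun i => hX.inner (𝕜 := ℝ) (hZi i))
  have hFY := hF.comp (measurable_pi_lambda _ fun i => hY.inner (𝕜 := ℝ) (hZi i))
  exact (hFX.mul hFY).mul
    (hg.comp ((measurable_projC hX hZ).inner (𝕜 := ℝ) (measurable_projC hY hZ)))

lemma integrable_hfun {μ : Measure Ω} [IsFiniteMeasure μ] (hF : Measurable F)
    (hFbd : ∀ v, |F v| ≤ CF) (hg : Measurable g) (hgpsd : PosSemidefOnSphere (n - m) g)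
    (hX : Measurable X) (hY : Measurable Y) (hZ : Measurable Z) :
    Integrable (fun ω => hfun F g (X ω) (Y ω) (Z ω).1) μ :=
  .of_bound (measurable_hfun hF hg hX hY hZ).aestronglyMeasurable _
    (ae_of_all _ fun ω => abs_hfun_le hFbd hgpsd (Z ω).2 (X ω) (Y ω))

lemma integral_hfun_mul_nonneg (hmn : m < n) (hF : Measurable F) (hFbd : ∀ v, |F v| ≤ CF)
    (hg : Measurable g) (hgpsd : PosSemidefOnSphere (n - m) g) (z : Stiefel n m)
    {f : EuclideanSpace ℝ (Fin n) → ℝ} (hf : Continuous f) :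
    0 ≤ ∫ p, hfun F g p.1 p.2 z.1 * (f p.1 * f p.2)
      ∂(sphereUniform (EuclideanSpace ℝ (Fin n))).prod
        (sphereUniform (EuclideanSpace ℝ (Fin n))) := by
  have : Nonempty (Fin n) := ⟨⟨0, by omega⟩⟩
  have hspan : Submodule.span ℝ (Set.range z.1) ≠ ⊤ :=
    (span_lt_top_of_card_lt_finrank (by
      rw [Set.toFinset_card, finrank_euclideanSpace_fin]
      exact (Fintype.card_range_le z.1).trans_lt (by simpa using hmn))).ne
  refine integral_prod_self_nonneg ?_ ?_ fun M => ?_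
  · exact integrable_mul_of_continuous
      (integrable_hfun hF hFbd hg hgpsd (by fun_prop) (by fun_prop) measurable_const) (by fun_prop)
  · exact integrable_mul_of_continuous
      (integrable_hfun hF hFbd hg hgpsd (by fun_prop) (by fun_prop) measurable_const) (by fun_prop)
  · have hae := ae_all_iff.2 fun i => (measurePreserving_eval
      (fun _ : Fin M => sphereUniform (EuclideanSpace ℝ (Fin n))) i).quasiMeasurePreserving.ae
        (ae_sphereUniform_notMem hspan)
    filter_upwards [hae] with ω hω
    exact sum_sum_hfun_nonneg F hgpsd z.2 hω fun i => f (ω i)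

variable {ν : Measure (Stiefel n m)} [IsProbabilityMeasure ν]

lemma integral_Hfun_mul_nonneg (hmn : m < n) (hF : Measurable F) (hFbd : ∀ v, |F v| ≤ CF)
    (hg : Measurable g) (hgpsd : PosSemidefOnSphere (n - m) g)
    {f : EuclideanSpace ℝ (Fin n) → ℝ} (hf : Continuous f) :
    0 ≤ ∫ x, ∫ y, Hfun ν F g x y * (f x * f y)
      ∂sphereUniform (EuclideanSpace ℝ (Fin n)) ∂sphereUniform (EuclideanSpace ℝ (Fin n)) := by
  have : Nonempty (Fin n) := ⟨⟨0, by omega⟩⟩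
  set S := Metric.sphere (0 : EuclideanSpace ℝ (Fin n)) 1
  set σ := sphereUniform (EuclideanSpace ℝ (Fin n))
  have hff : Continuous fun p : S × S => f p.1 * f p.2 := by fun_prop
  obtain ⟨C, hC⟩ := isCompact_univ.exists_bound_of_continuousOn hff.continuousOn
  have hint : Integrable (fun q : (S × S) × Stiefel n m =>
      hfun F g (q.1.1 : EuclideanSpace ℝ (Fin n)) q.1.2 q.2.1 * (f q.1.1 * f q.1.2))
      ((σ.prod σ).prod ν) :=
    (integrable_hfun hF hFbd hg hgpsd (by fun_prop) (by fun_prop) measurable_snd).mul_bdd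
      (c := C) (hff.measurable.comp measurable_fst).aestronglyMeasurable
      (ae_of_all _ fun q => hC q.1 trivial)
  have hHfun (p : S × S) : Hfun ν F g p.1 p.2 * (f p.1 * f p.2) =
      ∫ z, hfun F g (p.1 : EuclideanSpace ℝ (Fin n)) p.2 z.1 * (f p.1 * f p.2) ∂ν :=
    (integral_mul_const _ _).symm
  rw [integral_integral (f := fun x y : S => Hfun ν F g x y * (f x * f y))
    (by simpa only [Function.uncurry_def, hHfun] using hint.integral_prod_left)]
  simp only [hHfun]
  rw [integral_integral_swap hint]
  exact integral_nonneg fun z => integral_hfun_mul_nonneg hmn hF hFbd hg hgpsd z hf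

lemma integrable_HofT (hn : 2 ≤ n) {μ : Measure ℝ} [IsFiniteMeasure μ] (hF : Measurable F)
    (hFbd : ∀ v, |F v| ≤ CF) (hg : Measurable g) (hgpsd : PosSemidefOnSphere (n - m) g) :
    Integrable (HofT hn ν F g) μ := by
  have hint := integrable_hfun (μ := μ.prod ν) hF hFbd hg hgpsd
    (X := fun _ => EuclideanSpace.single (⟨0, by omega⟩ : Fin n) 1)
    (Y := fun p => p.1 • EuclideanSpace.single (⟨0, by omega⟩ : Fin n) 1 +
      √(1 - p.1 ^ 2) • EuclideanSpace.single (⟨1, by omega⟩ : Fin n) 1)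
    (by fun_prop) (by fun_prop) measurable_snd
  exact hint.integral_prod_left

end Bounds

lemma projC_map (A : EuclideanSpace ℝ (Fin n) ≃ₗᵢ[ℝ] EuclideanSpace ℝ (Fin n))
    (z : Fin m → EuclideanSpace ℝ (Fin n)) (x : EuclideanSpace ℝ (Fin n)) :
    projC (fun i => A (z i)) (A x) = A (projC z x) := by
  have hresid : A x - ∑ i, ⟪A x, A (z i)⟫ • A (z i) = A (x - ∑ i, ⟪x, z i⟫ • z i) := by simp
  rw [projC, projC, hresid, A.norm_map, map_smul]

lemma hfun_map (F : (Fin m → ℝ) → ℝ) (g : ℝ → ℝ)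
    (A : EuclideanSpace ℝ (Fin n) ≃ₗᵢ[ℝ] EuclideanSpace ℝ (Fin n))
    (x y : EuclideanSpace ℝ (Fin n)) (z : Fin m → EuclideanSpace ℝ (Fin n)) :
    hfun F g (A x) (A y) (fun i => A (z i)) = hfun F g x y z := by
  simp only [hfun, projC_map, A.inner_map_map]

variable {F : (Fin m → ℝ) → ℝ} {g : ℝ → ℝ} {ν : Measure (Stiefel n m)}

lemma Hfun_map (hν : IsInvProb ν) (hF : Measurable F) (hg : Measurable g)
    (A : EuclideanSpace ℝ (Fin n) ≃ₗᵢ[ℝ] EuclideanSpace ℝ (Fin n))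
    (x y : EuclideanSpace ℝ (Fin n)) : Hfun ν F g (A x) (A y) = Hfun ν F g x y := by
  have hA : Measurable (frameMap A : Stiefel n m → Stiefel n m) :=
    Measurable.subtype_mk (measurable_pi_lambda _ fun i =>
      A.continuous.measurable.comp ((measurable_pi_apply i).comp measurable_subtype_coe))
  have hmeas : Measurable fun z : Stiefel n m => hfun F g (A x) (A y) z.1 :=
    measurable_hfun hF hg measurable_const measurable_const measurable_id
  conv_lhs => rw [Hfun, ← hν.2 A]
  rw [integral_map hA.aemeasurable hmeas.aestronglyMeasurable]
  simp only [frameMap, hfun_map, Hfun]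

lemma Hfun_eq_HofT (hν : IsInvProb ν) (hn : 2 ≤ n) (hF : Measurable F) (hg : Measurable g)
    (hx : ‖x‖ = 1) (hy : ‖y‖ = 1) : Hfun ν F g x y = HofT hn ν F g ⟪x, y⟫ := by
  set e₀ : EuclideanSpace ℝ (Fin n) := EuclideanSpace.single ⟨0, by omega⟩ 1
  set e₁ : EuclideanSpace ℝ (Fin n) := EuclideanSpace.single ⟨1, by omega⟩ 1
  set t := ⟪x, y⟫
  have he₀ : ‖e₀‖ = 1 := by simp [e₀]
  have he₁ : ‖e₁‖ = 1 := by simp [e₁]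
  have he : ⟪e₀, e₁⟫ = 0 := by simp [e₀, e₁, EuclideanSpace.inner_single_left]
  have ht : 0 ≤ 1 - t ^ 2 := by
    have := abs_real_inner_le_norm x y
    rw [hx, hy, one_mul] at this
    exact sub_nonneg.2 (sq_le_one_iff_abs_le_one t |>.2 this)
  have hnorm : ‖t • e₀ + √(1 - t ^ 2) • e₁‖ = 1 := by
    rw [← sq_eq_sq₀ (norm_nonneg _) zero_le_one, norm_add_sq_real, norm_smul, norm_smul,
      real_inner_smul_left, real_inner_smul_right, he, he₀, he₁, norm_eq_abs, norm_eq_abs,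
      mul_one, mul_one, sq_abs, sq_abs, sq_sqrt ht]
    ring
  obtain ⟨A, hAx, hAy⟩ := exists_linearIsometryEquiv_apply_pair_eq (hx.trans he₀.symm)
    (hy.trans hnorm.symm) (show t = ⟪e₀, t • e₀ + √(1 - t ^ 2) • e₁⟫ by
      rw [inner_add_right, real_inner_smul_right, real_inner_smul_right,
        real_inner_self_eq_norm_sq, he, he₀]
      ring)
  rw [← Hfun_map hν hF hg A, hAx, hAy, HofT]

end Stiefel

theorem stiefel_average_jacobi_coeffs_nonneg_general
    {n m : ℕ} (hmn : m < n) (hn : 2 ≤ n)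
    {F : (Fin m → ℝ) → ℝ} (hF : Measurable F) {CF : ℝ} (hFbd : ∀ v, |F v| ≤ CF)
    {g : ℝ → ℝ} (hg : Measurable g) (hgpsd : PosSemidefOnSphere (n - m) g)
    {ν : Measure (Stiefel n m)} (hν : IsInvProb ν) (k : ℕ) :
    0 ≤ ∫ t in (-1 : ℝ)..1,
        HofT hn ν F g t * jacobiP (((n : ℝ) - 3) / 2) (((n : ℝ) - 3) / 2) k t *
          (1 - t ^ 2) ^ (((n : ℝ) - 3) / 2) := by
  have := hν.1
  have hdim : Module.finrank ℝ (EuclideanSpace ℝ (Fin n)) = n := finrank_euclideanSpace_fin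
  have hα := neg_one_lt_gegenbauer_exponent hn
  have : IsFiniteMeasure (gegenbauerMeasure n) := isFiniteMeasure_jacobiMeasure hα hα
  have hcoeff := integral_mul_gegenbauerPoly_nonneg (E := EuclideanSpace ℝ (Fin n))
    (hn.trans_eq hdim.symm) (h := HofT hn ν F g)
    (by rw [hdim]; exact integrable_HofT hn hF hFbd hg hgpsd)
    (fun f hf => by
      simpa only [Hfun_eq_HofT hν hn hF hg (mem_sphere_zero_iff_norm.1 (Subtype.property _))
        (mem_sphere_zero_iff_norm.1 (Subtype.property _))]
        using integral_Hfun_mul_nonneg (ν := ν) hmn hF hFbd hg hgpsd hf) k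
  rw [hdim, gegenbauerMeasure, integral_jacobiMeasure] at hcoeff
  rw [intervalIntegral.integral_of_le (by norm_num), integral_Ioc_eq_integral_Ioo]
  refine hcoeff.trans_eq (setIntegral_congr_fun measurableSet_Ioo fun t ht => ?_)
  simp only [gegenbauerPoly, eval_jacobiPoly]
  rw [← mul_rpow (by linarith [ht.2]) (by linarith [ht.1])]
  ring_nf

/-- Nonnegativity of the Jacobi coefficients of the Stiefel average `H`. -/
theorem stiefel_average_jacobi_coeffs_nonneg
    (n m : ℕ) (hm : 1 ≤ m) (hmn : m ≤ n - 2) (hn : 2 ≤ n)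
    (F : (Fin m → ℝ) → ℝ) (hFmeas : Measurable F) (CF : ℝ) (hFbd : ∀ v, |F v| ≤ CF)
    (g : ℝ → ℝ) (hgmeas : Measurable g) (Cg : ℝ) (hgbd : ∀ t, |g t| ≤ Cg)
    (hgpsd : PosSemidefOnSphere (n - m) g)
    (ν : Measure (Stiefel n m)) (hν : IsInvProb ν) (k : ℕ) :
    0 ≤ ∫ t in (-1 : ℝ)..1,
        HofT hn ν F g t * jacobiP (((n : ℝ) - 3) / 2) (((n : ℝ) - 3) / 2) k t *
          (1 - t ^ 2) ^ (((n : ℝ) - 3) / 2) :=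
  stiefel_average_jacobi_coeffs_nonneg_general (by omega) hn hFmeas hFbd hgmeas hgpsd hν k
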